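/- The Hochschild cohomology of A = FK(3) over a field of characteristic ≠ 2,3 satisfies: dim HHⁿ(A) = (5/2)n + 4 if n ≡ 0 (mod 4), dim HHⁿ(A) = (5/2)n + 5 if n ≡ 2 (mod 4), and dim HHⁿ(A) = (5n+9)/2 if n is odd. -/

import Mathlib

/-!
The Hochschild cohomology `HHⁿ(A) = Extⁿ_{A^e}(A, A)` of the Fomin–Kirillov algebra `A = FK(3)`
satisfies `dim HHⁿ(A) = (5/2)n + 4` if `n ≡ 0 (mod 4)`, `(5/2)n + 5` if `n ≡ 2 (mod 4)`, and
`(5n+9)/2` if `n` is odd.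
-/

open FreeAlgebra CategoryTheory
open scoped TensorProduct

/-- The defining relations of the Fomin–Kirillov algebra `FK(3)`. -/
inductive FKRel (k : Type) [Field k] : FreeAlgebra k (Fin 3) → FreeAlgebra k (Fin 3) → Prop
  | sq_a : FKRel k (ι k (0 : Fin 3) * ι k (0 : Fin 3)) 0
  | sq_b : FKRel k (ι k (1 : Fin 3) * ι k (1 : Fin 3)) 0
  | sq_c : FKRel k (ι k (2 : Fin 3) * ι k (2 : Fin 3)) 0
  | rel1 : FKRel k (ι k (0 : Fin 3) * ι k (1 : Fin 3) + ι k (1 : Fin 3) * ι k (2 : Fin 3) +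
      ι k (2 : Fin 3) * ι k (0 : Fin 3)) 0
  | rel2 : FKRel k (ι k (1 : Fin 3) * ι k (0 : Fin 3) + ι k (0 : Fin 3) * ι k (2 : Fin 3) +
      ι k (2 : Fin 3) * ι k (1 : Fin 3)) 0

/-- The Fomin–Kirillov algebra on three generators. -/
abbrev FK3 (k : Type) [Field k] := RingQuot (FKRel k)

variable (k : Type) [Field k]

/-- The enveloping algebra `A^e = A ⊗ₖ Aᵒᵖ` of `A = FK(3)`. -/
abbrev FKAe := FK3 k ⊗[k] (FK3 k)ᵐᵒᵖ

noncomputable instance : Module (FKAe k) (FK3 k) := TensorProduct.Algebra.module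

/-- The Hochschild cohomology `HHⁿ(FK(3)) = Extⁿ_{A^e}(A, A)`. -/
noncomputable def HHcohomology (n : ℕ) : ModuleCat k :=
  ((Ext k (ModuleCat (FKAe k)) n).obj
      (Opposite.op (ModuleCat.of (FKAe k) (FK3 k)))).obj (ModuleCat.of (FKAe k) (FK3 k))

/-!
The bimodule Koszul complex `K` of the quadratic algebra `A = FK(3)` consists of free bimodules of
ranks `1, 3, 5, 6, 6, …` and becomes periodic of period two. As `A` is not Koszul, `K` is not a
resolution: besides `A` in degree zero it has a copy of `A` as homology in degree three. A map `f`
of degree three on `K` with square zero, which anticommutes with the differential, identifies the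
two, so the shifted copies `K, K[4], K[8], …` spliced along `f` form a free resolution of `A`.
Every cocycle of `Hom(K, A)` of degree at least three is killed by precomposition with `f`, hence
the dimensions of the spaces of cocycles of the spliced complex are sums of those for `K`, which
are `4, 15, 31, 41, 41, …`.

In the monomial basis of `A` all maps have integral coefficients. Exactness of `K` follows from
contracting homotopies of right modules up to the factor `18`, and the dimensions of the spaces of
cocycles from explicit bases and partial inverses of the codifferential up to divisors of `18`.
This reduces everything to identities between integral tables, which are decided by evaluation.
-/

namespace FKThree

/-! ### Formal integral combinations -/

/-- Formal integral combinations of elements of `ι`, as lists of terms. Unlike `ι →₀ ℤ` they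
reduce in the kernel, so identities between them can be decided. -/
abbrev Comb (ι : Type*) := List (ℤ × ι)

namespace Comb

variable {ι κ M N : Type*} [AddCommGroup M] [AddCommGroup N]

/-- The value of a formal combination when the symbol `i` stands for `φ i`. -/
def eval (φ : ι → M) (L : Comb ι) : M := (L.map fun p => p.1 • φ p.2).sum

@[simp]
lemma eval_nil (φ : ι → M) : eval φ [] = 0 := rfl

@[simp]
lemma eval_cons (φ : ι → M) (c : ℤ) (i : ι) (L : Comb ι) :
    eval φ ((c, i) :: L) = c • φ i + eval φ L :=
  List.sum_cons

lemma eval_single (φ : ι → M) (i : ι) : eval φ [(1, i)] = φ i := by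
  rw [eval_cons, eval_nil, one_smul, add_zero]

lemma map_eval {F : Type*} [FunLike F M N] [AddMonoidHomClass F M N] (f : F) (φ : ι → M)
    (L : Comb ι) : f (eval φ L) = eval (fun i => f (φ i)) L := by
  induction L with
  | nil => exact map_zero f
  | cons p L ih => rw [eval_cons, eval_cons, map_add, map_zsmul, ih]

lemma smul_eval {R : Type*} [Ring R] [Module R M] (c : R) (φ : ι → M) (L : Comb ι) :
    c • eval φ L = eval (fun i => c • φ i) L :=
  map_eval (DistribSMul.toAddMonoidHom M c) φ L

lemma eval_smul {R : Type*} [Ring R] [Module R M] (φ : ι → R) (L : Comb ι) (x : M) :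
    eval φ L • x = eval (fun i => φ i • x) L :=
  map_eval ((smulAddHom R M).flip x) φ L

lemma eval_zero (L : Comb ι) : eval (fun _ => (0 : M)) L = 0 :=
  (map_eval (0 : M →+ M) (fun _ => 0) L).symm

lemma eval_mem {S : Type*} [SetLike S M] [AddSubgroupClass S M] (s : S) {φ : ι → M}
    (h : ∀ i, φ i ∈ s) (L : Comb ι) : eval φ L ∈ s := by
  induction L with
  | nil => exact zero_mem s
  | cons p L ih => exact add_mem (zsmul_mem (h _) _) ih

/-- Iteration over the terms of a formal combination. It is stated with the recursor, which the
kernel evaluates much faster than the compilation of a definition by structural recursion. -/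
def fold {α : Type*} (f : ℤ → ι → α → α) (x : α) (L : Comb ι) : α :=
  List.rec x (fun p _ y => f p.1 p.2 y) L

/-- The formal combination `c • L + L'`. -/
def addScaled (c : ℤ) (L L' : Comb ι) : Comb ι := fold (fun d i L'' => (c * d, i) :: L'') L' L

/-- Substitutes the formal combination `T i` for the symbol `i`. -/
def bind (T : κ → Comb ι) (L : Comb κ) : Comb ι := fold (fun c i L' => addScaled c (T i) L') [] L

@[simp]
lemma eval_addScaled (φ : ι → M) (c : ℤ) (L L' : Comb ι) :
    eval φ (addScaled c L L') = c • eval φ L + eval φ L' := by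
  induction L with
  | nil => rw [eval_nil, smul_zero, zero_add]; rfl
  | cons p L ih => rw [eval_cons, smul_add, ← mul_smul, add_assoc, ← ih]; exact eval_cons ..

@[simp]
lemma eval_bind (φ : ι → M) (T : κ → Comb ι) (L : Comb κ) :
    eval φ (bind T L) = eval (fun i => eval φ (T i)) L := by
  induction L with
  | nil => rfl
  | cons p L ih => rw [eval_cons, ← ih, ← eval_addScaled]; rfl

variable [DecidableEq ι] [DecidableEq κ]

/-- The coefficient of a symbol in a formal combination. -/
def coeff (i : ι) (L : Comb ι) : ℤ := fold (fun c j d => if j = i then c + d else d) 0 L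

/-- Equality of two formal combinations after collecting terms. -/
def Equiv (L L' : Comb ι) : Prop := ∀ i, coeff i L = coeff i L'

lemma coeff_cons (i j : ι) (c : ℤ) (L : Comb ι) :
    coeff i ((c, j) :: L) = if j = i then c + coeff i L else coeff i L := rfl

lemma eval_single_apply (i : ι) (L : Comb ι) :
    eval (fun j => Finsupp.single j (1 : ℤ)) L i = coeff i L := by
  induction L with
  | nil => rfl
  | cons p L ih =>
    rw [eval_cons, Finsupp.add_apply, ih, coeff_cons]
    split_ifs with h <;> simp [h]

lemma Equiv.eval_eq {L L' : Comb ι} (h : Equiv L L') (φ : ι → M) : eval φ L = eval φ L' := by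
  have key : eval (fun j => Finsupp.single j (1 : ℤ)) L =
      eval (fun j => Finsupp.single j (1 : ℤ)) L' :=
    Finsupp.ext fun i => by rw [eval_single_apply, eval_single_apply, h i]
  simpa [map_eval] using congrArg (Finsupp.linearCombination ℤ φ) key

/-- The part of a formal combination of pairs in which the first entry is `a`. -/
def fibre (a : κ) (L : Comb (κ × ι)) : Comb ι :=
  fold (fun c i L' => if i.1 = a then (c, i.2) :: L' else L') [] L

omit [DecidableEq ι] in
lemma fibre_cons (a : κ) (c : ℤ) (i : κ × ι) (L : Comb (κ × ι)) :
    fibre a ((c, i) :: L) = if i.1 = a then (c, i.2) :: fibre a L else fibre a L := rfl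

lemma coeff_fibre (a : κ) (i : ι) (L : Comb (κ × ι)) : coeff i (fibre a L) = coeff (a, i) L := by
  induction L with
  | nil => rfl
  | cons p L ih =>
    rw [coeff_cons, ← ih, fibre_cons]
    by_cases h : p.2.1 = a <;> simp [h, coeff_cons, Prod.ext_iff]

lemma equiv_iff_fibre {L L' : Comb (κ × ι)} :
    Equiv L L' ↔ ∀ a, Equiv (fibre a L) (fibre a L') := by
  simp only [Equiv, coeff_fibre, Prod.forall]

lemma coeff_eq_zero {i : ι} {L : Comb ι} (h : ∀ p ∈ L, p.2 ≠ i) : coeff i L = 0 := by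
  induction L with
  | nil => rfl
  | cons p L ih =>
    rw [List.forall_mem_cons] at h
    rw [coeff_cons, if_neg h.1, ih h.2]

lemma coeff_addScaled (i : ι) (c : ℤ) (L L' : Comb ι) :
    coeff i (addScaled c L L') = c * coeff i L + coeff i L' := by
  simp [← eval_single_apply]

lemma equiv_iff_forall_mem {L L' : Comb ι} :
    Equiv L L' ↔ ∀ p ∈ addScaled (-1) L' L, coeff p.2 (addScaled (-1) L' L) = 0 := by
  have h (i : ι) : coeff i L = coeff i L' ↔ coeff i (addScaled (-1) L' L) = 0 := by
    rw [coeff_addScaled, neg_one_mul, neg_add_eq_zero, eq_comm]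
  simp only [Equiv, h]
  refine ⟨fun H p _ => H p.2, fun H i => ?_⟩
  by_contra hi
  exact hi (coeff_eq_zero fun p hp hpi => hi (hpi ▸ H p hp))

instance (L L' : Comb ι) : Decidable (Equiv L L') :=
  decidable_of_iff _ equiv_iff_forall_mem.symm

/- Distributing the terms over the fibres first avoids a quadratic search for equal symbols. -/
instance [Fintype κ] [∀ L L' : Comb ι, Decidable (Equiv L L')]
    (L L' : Comb (κ × ι)) : Decidable (Equiv L L') :=
  decidable_of_iff _ equiv_iff_fibre.symm

end Comb

/-! ### Free bimodules over an algebra with given structure constants -/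

open Comb

/-- Formal structure constants of an algebra with a basis indexed by `W` and containing `1`. -/
class StructureConstants (W : Type*) extends One W where
  /-- The product of two basis elements. -/
  mul : W → W → Comb W
  one_mul : ∀ w, mul 1 w = [(1, w)]
  mul_one : ∀ w, mul w 1 = [(1, w)]

/-- Bases of an algebra `A` over `k` and of its enveloping algebra `R`, multiplied and acting as
prescribed by the structure constants of `W`. The ring `R` is abstract: the argument only uses its
basis, whose element `(u, v)` stands for `u ⊗ v`. -/
structure EnvelopingBasis (k R A W : Type*) [Field k] [Ring R] [Algebra k R] [AddCommGroup A]
    [Module k A] [Module R A] [StructureConstants W] where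
  /-- The basis of the algebra. -/
  word : Module.Basis W k A
  /-- The basis of the enveloping algebra. -/
  pair : Module.Basis (W × W) k R
  pair_one : pair (1, 1) = 1
  pair_mul_pair : ∀ u v u' v', pair (u, v) * pair (u', v') =
    eval (fun p => eval (fun q => pair (p, q)) (StructureConstants.mul v' v))
      (StructureConstants.mul u u')
  pair_smul_word : ∀ u v w, pair (u, v) • word w =
    eval (fun p => eval word (StructureConstants.mul p v)) (StructureConstants.mul u w)

section Formal

variable {W : Type*} [StructureConstants W] {r s t : ℕ}

/-- Names of the `k`-basis elements of the free bimodule of rank `r` over an algebra with basis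
`W`: the triple `(h, u, v)` stands for `u ⊗ v` in the summand `h`. -/
abbrev BimoduleIndex (W : Type*) (r : ℕ) := Fin r × W × W

/-- The formal product of `u ⊗ v` with an element of a free bimodule. -/
def act (u v : W) : Comb (BimoduleIndex W r) → Comb (BimoduleIndex W r) :=
  bind fun i => bind (fun p => bind (fun q => [(1, i.1, p, q)]) (StructureConstants.mul i.2.2 v))
    (StructureConstants.mul u i.2.1)

/-- A bimodule homomorphism between free bimodules, given by the images of the generators. -/
abbrev BimoduleTable (W : Type*) (r s : ℕ) := Fin r → Comb (BimoduleIndex W s)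

namespace BimoduleTable

/-- The table of a sum of two maps. -/
def add (F F' : BimoduleTable W r s) : BimoduleTable W r s := fun g => addScaled 1 (F g) (F' g)

/-- The table of the composition of `F` followed by `F'`. -/
def comp (F' : BimoduleTable W s t) (F : BimoduleTable W r s) : BimoduleTable W r t :=
  fun g => bind (fun i => act i.2.1 i.2.2 (F' i.1)) (F g)

end BimoduleTable

/-- A homomorphism of right modules between free bimodules, given by the images of the elements
`u ⊗ 1` of the summands. -/
abbrev RightTable (W : Type*) (r s : ℕ) := Fin r → W → Comb (BimoduleIndex W s)

/-- A bimodule homomorphism regarded as a homomorphism of right modules. -/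
def BimoduleTable.toRight (F : BimoduleTable W r s) : RightTable W r s := fun g u => act u 1 (F g)

namespace RightTable

/-- The table of the composition of `T` followed by `T'`. -/
def comp (T' : RightTable W s t) (T : RightTable W r s) : RightTable W r t :=
  fun g u => bind (fun i => act 1 i.2.2 (T' i.1 i.2.1)) (T g u)

/-- The table of a sum of two maps. -/
def add (T T' : RightTable W r s) : RightTable W r s := fun g u => addScaled 1 (T g u) (T' g u)

/-- The table of multiplication by an integer. -/
def scalar (r : ℕ) (c : ℤ) : RightTable W r r := fun g u => [(c, g, u, 1)]

/-- The table of the map `u ⊗ v ↦ c • (1 ⊗ uv)`, which is `c` times the multiplication of the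
algebra followed by its section of right modules `w ↦ 1 ⊗ w`. -/
def multiplication (c : ℤ) : RightTable W 1 1 := fun _ u => [(c, 0, 1, u)]

end RightTable

end Formal

namespace EnvelopingBasis

variable {k R A W : Type*} [Field k] [Ring R] [Algebra k R] [AddCommGroup A]
  [Module k A] [Module R A] [StructureConstants W]
  (B : EnvelopingBasis k R A W) {r s t : ℕ}

section Bimodule

/-- The `k`-basis of the free bimodule of rank `r`. -/
noncomputable def free (r : ℕ) : Module.Basis (BimoduleIndex W r) k (Fin r → R) :=
  (Pi.basis fun _ => B.pair).reindex (_root_.Equiv.sigmaEquivProd _ _)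

lemma free_apply (g : Fin r) (u v : W) : B.free r (g, u, v) = Pi.single g (B.pair (u, v)) := by
  simp [free]

lemma pair_smul_free (u v : W) (i : BimoduleIndex W r) : B.pair (u, v) • B.free r i =
    eval (fun p => eval (fun q => B.free r (i.1, p, q)) (StructureConstants.mul i.2.2 v))
      (StructureConstants.mul u i.2.1) := by
  obtain ⟨h, u', v'⟩ := i
  simp only [free_apply, ← Pi.single_smul, smul_eq_mul, pair_mul_pair]
  simp only [← AddMonoidHom.single_apply, map_eval]

lemma pair_one_mul_pair (v u' v' : W) : B.pair (1, v) * B.pair (u', v') =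
    eval (fun q => B.pair (u', q)) (StructureConstants.mul v' v) := by
  rw [pair_mul_pair, StructureConstants.one_mul, eval_single]

/-- The bimodule homomorphism with a given table. -/
noncomputable def bimoduleMap (F : BimoduleTable W r s) : (Fin r → R) →ₗ[R] (Fin s → R) :=
  Fintype.linearCombination R fun g => eval (B.free s) (F g)

lemma bimoduleMap_free (F : BimoduleTable W r s) (i : BimoduleIndex W r) :
    B.bimoduleMap F (B.free r i) = B.pair i.2 • eval (B.free s) (F i.1) := by
  rw [← Prod.mk.eta (p := i), ← Prod.mk.eta (p := i.2), free_apply, bimoduleMap,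
    Fintype.linearCombination_apply_single]

lemma bimoduleMap_free_one (F : BimoduleTable W r s) (g : Fin r) :
    B.bimoduleMap F (B.free r (g, 1, 1)) = eval (B.free s) (F g) := by
  rw [bimoduleMap_free, pair_one, one_smul]

lemma bimodule_ext {M : Type*} [AddCommGroup M] [Module R M] {φ ψ : (Fin r → R) →ₗ[R] M}
    (h : ∀ g, φ (B.free r (g, 1, 1)) = ψ (B.free r (g, 1, 1))) : φ = ψ := by
  refine LinearMap.pi_ext' fun g => LinearMap.ext_ring ?_
  simpa [free_apply, pair_one] using h g

/-- The homomorphism of right modules with a given table, as a `k`-linear map. -/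
noncomputable def rightMap (T : RightTable W r s) : (Fin r → R) →ₗ[k] (Fin s → R) :=
  (B.free r).constr k fun i => B.pair (1, i.2.2) • eval (B.free s) (T i.1 i.2.1)

lemma rightMap_free (T : RightTable W r s) (i : BimoduleIndex W r) :
    B.rightMap T (B.free r i) = B.pair (1, i.2.2) • eval (B.free s) (T i.1 i.2.1) :=
  (B.free r).constr_basis _ _ _

lemma rightMap_pair_one_smul (T : RightTable W r s) (v : W) (x : Fin r → R) :
    B.rightMap T (B.pair (1, v) • x) = B.pair (1, v) • B.rightMap T x := by
  suffices h : B.rightMap T ∘ₗ Module.toModuleEnd k _ (B.pair (1, v)) =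
      Module.toModuleEnd k _ (B.pair (1, v)) ∘ₗ B.rightMap T from LinearMap.congr_fun h x
  refine (B.free r).ext fun i => ?_
  simp only [LinearMap.comp_apply, Module.toModuleEnd_apply, DistribSMul.toLinearMap_apply,
    pair_smul_free, StructureConstants.one_mul, eval_single, map_eval, rightMap_free, smul_smul,
    pair_one_mul_pair, eval_smul]

lemma bimoduleMap_eq_zero [DecidableEq W] {F : BimoduleTable W r s} (h : ∀ g, (F g).Equiv []) :
    B.bimoduleMap F = 0 := by
  refine B.bimodule_ext fun g => ?_
  rw [bimoduleMap_free_one, (h g).eval_eq, eval_nil, LinearMap.zero_apply]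

lemma rightMap_scalar (c : ℤ) : B.rightMap (.scalar r c) = c • LinearMap.id := by
  refine (B.free r).ext fun i => ?_
  rw [rightMap_free, RightTable.scalar, eval_cons, eval_nil, add_zero, smul_comm, pair_smul_free]
  simp only [StructureConstants.one_mul, eval_single]
  rfl

lemma eval_act (u v : W) (L : Comb (BimoduleIndex W r)) :
    eval (B.free r) (act u v L) = B.pair (u, v) • eval (B.free r) L := by
  rw [act, eval_bind]
  simp only [eval_bind, eval_single, ← pair_smul_free]
  exact (smul_eval _ _ _).symm

lemma bimoduleMap_comp (F' : BimoduleTable W s t) (F : BimoduleTable W r s) :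
    B.bimoduleMap F' ∘ₗ B.bimoduleMap F = B.bimoduleMap (F'.comp F) := by
  refine B.bimodule_ext fun g => ?_
  rw [LinearMap.comp_apply, bimoduleMap_free_one, bimoduleMap_free_one, map_eval,
    BimoduleTable.comp, eval_bind]
  simp only [bimoduleMap_free, eval_act]

lemma bimoduleMap_add (F F' : BimoduleTable W r s) :
    B.bimoduleMap F + B.bimoduleMap F' = B.bimoduleMap (F.add F') := by
  refine B.bimodule_ext fun g => ?_
  rw [LinearMap.add_apply, bimoduleMap_free_one, bimoduleMap_free_one, bimoduleMap_free_one,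
    BimoduleTable.add, eval_addScaled, one_smul]

lemma rightMap_comp (T' : RightTable W s t) (T : RightTable W r s) :
    B.rightMap T' ∘ₗ B.rightMap T = B.rightMap (T'.comp T) := by
  refine (B.free r).ext fun i => ?_
  rw [LinearMap.comp_apply, rightMap_free, rightMap_pair_one_smul, rightMap_free, map_eval,
    RightTable.comp, eval_bind]
  simp only [rightMap_free, eval_act]

lemma rightMap_add (T T' : RightTable W r s) :
    B.rightMap T + B.rightMap T' = B.rightMap (T.add T') := by
  refine (B.free r).ext fun i => ?_
  rw [LinearMap.add_apply, rightMap_free, rightMap_free, rightMap_free, RightTable.add,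
    eval_addScaled, one_smul, smul_add]

lemma rightMap_congr [DecidableEq W] {T T' : RightTable W r s} (h : ∀ g u, (T g u).Equiv (T' g u)) :
    B.rightMap T = B.rightMap T' :=
  (B.free r).ext fun i => by rw [rightMap_free, rightMap_free, (h _ _).eval_eq]

lemma rightMap_eq_zero [DecidableEq W] {T : RightTable W r s} (h : ∀ g u, (T g u).Equiv []) :
    B.rightMap T = 0 :=
  (B.free r).ext fun i => by
    rw [rightMap_free, (h _ _).eval_eq, eval_nil, smul_zero, LinearMap.zero_apply]

lemma bimoduleMap_restrictScalars (F : BimoduleTable W r s) :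
    (B.bimoduleMap F).restrictScalars k = B.rightMap F.toRight := by
  refine (B.free r).ext fun i => ?_
  rw [LinearMap.restrictScalars_apply, bimoduleMap_free, rightMap_free, BimoduleTable.toRight,
    eval_act, smul_smul, pair_one_mul_pair, StructureConstants.one_mul, eval_single]

end Bimodule

end EnvelopingBasis

/-! ### Cocycles with coefficients in the algebra -/

section Dual

/-- Names of the `k`-basis elements of the space of bimodule homomorphisms from the free bimodule
of rank `r` to the algebra: the pair `(h, w)` stands for the map sending the generator `h` to `w`
and the other generators to zero. -/
abbrev DualIndex (W : Type*) (r : ℕ) := Fin r × W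

/-- Precomposition with the bimodule homomorphism `F`, on formal basis elements. -/
def BimoduleTable.dual {W : Type*} [StructureConstants W] {r s : ℕ}
    (F : BimoduleTable W r s) (x : DualIndex W s) : Comb (DualIndex W r) :=
  bind (fun g => bind (fun i => if i.1 = x.1 then
    bind (fun p => bind (fun q => [(1, g, q)]) (StructureConstants.mul p i.2.2))
      (StructureConstants.mul i.2.1 x.2) else []) (F g)) ((List.finRange r).map (1, ·))

lemma Comb.eval_finRange {M : Type*} [AddCommGroup M] {r : ℕ} (φ : Fin r → M) :
    eval φ ((List.finRange r).map (1, ·)) = ∑ g, φ g := by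
  rw [eval, List.map_map, Fin.sum_univ_def]
  simp only [Function.comp_def, one_smul]

lemma Comb.eval_linearMap_apply {R M N ι : Type*} [Ring R] [AddCommGroup M] [Module R M]
    [AddCommGroup N] [Module R N] (φ : ι → M →ₗ[R] N) (L : Comb ι) (x : M) :
    eval φ L x = eval (fun i => φ i x) L :=
  map_eval (LinearMap.evalAddMonoidHom x) φ L

/-- A certificate for the kernel of precomposition with a bimodule homomorphism of ranks
`r` and `s`: a basis of `z` cocycles, dual to the coordinates at certain pivots, and a map
inverting the precomposition on the common kernel of these coordinates. -/
structure CocycleTable (W : Type*) (r s z : ℕ) where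
  /-- The denominator of the partial inverse. -/
  scalar : ℤ
  /-- The cocycles with their pivots. -/
  cocycle : Fin z → DualIndex W s × Comb (DualIndex W s)
  /-- The partial inverse of precomposition, multiplied by `scalar`. -/
  inverse : DualIndex W r → Comb (DualIndex W s)

namespace CocycleTable

variable {W : Type*} [StructureConstants W] [DecidableEq W] {r s z : ℕ}

/-- The coordinates at the pivots. -/
def project (C : CocycleTable W r s z) (x : DualIndex W s) : Comb (Fin z) :=
  ((List.finRange z).filter fun i => (C.cocycle i).1 = x).map (1, ·)

/-- The identities which make a table of cocycles a certificate for the precomposition with `F`. -/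
structure Certifies (C : CocycleTable W r s z) (F : BimoduleTable W r s) : Prop where
  cocycle_closed : ∀ i, (bind F.dual (C.cocycle i).2).Equiv []
  project_cocycle : ∀ i, (bind C.project (C.cocycle i).2).Equiv [(1, i)]
  split : ∀ x, (addScaled C.scalar (bind (fun i => (C.cocycle i).2) (C.project x))
    (bind C.inverse (F.dual x))).Equiv [(C.scalar, x)]

instance [Fintype W] (C : CocycleTable W r s z) (F : BimoduleTable W r s) :
    Decidable (C.Certifies F) :=
  decidable_of_iff (_ ∧ _ ∧ _) ⟨fun h => ⟨h.1, h.2.1, h.2.2⟩, fun h => ⟨h.1, h.2, h.3⟩⟩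

end CocycleTable

section SplitKernel

variable {k M N U : Type*} [Field k] [AddCommGroup M] [Module k M] [AddCommGroup N] [Module k N]
  [AddCommGroup U] [Module k U] {D : M →ₗ[k] N} {ι : U →ₗ[k] M} {π : M →ₗ[k] U} {S : N →ₗ[k] M}
  {c : k}

lemma ker_le_range_of_split (hc : c ≠ 0) (h : c • (ι ∘ₗ π) + S ∘ₗ D = c • LinearMap.id) :
    LinearMap.ker D ≤ LinearMap.range ι := fun x hx => by
  have hx' : c • ι (π x) = c • x := by
    simpa [LinearMap.mem_ker.1 hx] using LinearMap.congr_fun h x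
  exact ⟨π x, (smul_right_injective M hc) hx'⟩

lemma finrank_ker_of_split (hc : c ≠ 0) (hD : D ∘ₗ ι = 0) (hι : π ∘ₗ ι = LinearMap.id)
    (h : c • (ι ∘ₗ π) + S ∘ₗ D = c • LinearMap.id) :
    Module.finrank k (LinearMap.ker D) = Module.finrank k U := by
  rw [(ker_le_range_of_split hc h).antisymm (LinearMap.range_le_ker_iff.2 hD)]
  exact LinearMap.finrank_range_of_inj (Function.LeftInverse.injective (LinearMap.congr_fun hι))

end SplitKernel

/-- The linear map given on the elements of a basis by formal combinations of those of another. -/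
noncomputable def tableMap {k ι κ M N : Type*} [Field k] [AddCommGroup M] [Module k M]
    [AddCommGroup N] [Module k N] (b : Module.Basis ι k M) (b' : Module.Basis κ k N)
    (T : ι → Comb κ) : M →ₗ[k] N :=
  b.constr k fun i => eval b' (T i)

section TableMap

variable {k ι κ μ M N P : Type*} [Field k] [AddCommGroup M] [Module k M] [AddCommGroup N]
  [Module k N] [AddCommGroup P] [Module k P] (b : Module.Basis ι k M) (b' : Module.Basis κ k N)
  (b'' : Module.Basis μ k P)

lemma tableMap_basis (T : ι → Comb κ) (i : ι) : tableMap b b' T (b i) = eval b' (T i) :=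
  b.constr_basis _ _ _

lemma tableMap_comp (T' : κ → Comb μ) (T : ι → Comb κ) :
    tableMap b' b'' T' ∘ₗ tableMap b b' T = tableMap b b'' fun i => bind T' (T i) :=
  b.ext fun i => by simp only [LinearMap.comp_apply, tableMap_basis, map_eval, eval_bind]

lemma smul_tableMap_add (c : ℤ) (T T' : ι → Comb κ) :
    (c : k) • tableMap b b' T + tableMap b b' T' =
      tableMap b b' fun i => addScaled c (T i) (T' i) :=
  b.ext fun i => by
    simp only [LinearMap.add_apply, LinearMap.smul_apply, tableMap_basis, eval_addScaled,
      Int.cast_smul_eq_zsmul]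

lemma tableMap_eq_zero [DecidableEq κ] {T : ι → Comb κ} (h : ∀ i, (T i).Equiv []) :
    tableMap b b' T = 0 :=
  b.ext fun i => by rw [tableMap_basis, (h i).eval_eq, eval_nil, LinearMap.zero_apply]

lemma tableMap_eq_smul_id [DecidableEq ι] {T : ι → Comb ι} {c : ℤ}
    (h : ∀ i, (T i).Equiv [(c, i)]) : tableMap b b T = (c : k) • LinearMap.id :=
  b.ext fun i => by
    rw [tableMap_basis, (h i).eval_eq, eval_cons, eval_nil, add_zero, LinearMap.smul_apply,
      LinearMap.id_apply, Int.cast_smul_eq_zsmul]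

end TableMap

namespace EnvelopingBasis

variable {k R A W : Type*} [Field k] [Ring R] [Algebra k R] [AddCommGroup A]
  [Module k A] [Module R A] [IsScalarTower k R A] [StructureConstants W]
  (B : EnvelopingBasis k R A W) {r s t z : ℕ}

/-- The `k`-basis of the space of bimodule homomorphisms from the free bimodule of rank `r`. -/
noncomputable def homBasis (r : ℕ) : Module.Basis (DualIndex W r) k ((Fin r → R) →ₗ[R] A) :=
  ((Pi.basis fun _ => B.word).reindex (_root_.Equiv.sigmaEquivProd _ _)).map
    ((Pi.basisFun R (Fin r)).constr k)

lemma homBasis_apply (i : DualIndex W r) (x : Fin r → R) :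
    B.homBasis r i x = x i.1 • B.word i.2 := by
  rw [homBasis, Module.Basis.map_apply, Module.Basis.constr_apply_fintype,
    Fintype.sum_eq_single i.1 fun g hg => ?_]
  · simp
  · simp [hg]

lemma homBasis_single_self (g : Fin r) (w u v : W) :
    B.homBasis r (g, w) (B.free r (g, u, v)) = B.pair (u, v) • B.word w := by
  rw [homBasis_apply, free_apply, Pi.single_eq_same]

lemma homBasis_single_of_ne {g h : Fin r} (hgh : g ≠ h) (w u v : W) :
    B.homBasis r (g, w) (B.free r (h, u, v)) = 0 := by
  rw [homBasis_apply, free_apply, Pi.single_eq_of_ne hgh, zero_smul]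

lemma lcomp_bimoduleMap_homBasis (F : BimoduleTable W r s) (i : DualIndex W s) :
    LinearMap.lcomp k A (B.bimoduleMap F) (B.homBasis s i) = eval (B.homBasis r) (F.dual i) := by
  obtain ⟨h', w⟩ := i
  refine B.bimodule_ext fun g => ?_
  simp only [LinearMap.lcomp_apply, bimoduleMap_free_one, map_eval,
    BimoduleTable.dual, eval_bind, eval_finRange, LinearMap.sum_apply, eval_linearMap_apply]
  rw [Fintype.sum_eq_single g fun g' hg => ?_]
  · congr 1 with ⟨h, u, v⟩
    split_ifs with hi
    · obtain rfl : h = h' := hi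
      simp only [homBasis_single_self, eval_bind, eval_single, pair_one, one_smul,
        pair_smul_word]
    · rw [homBasis_single_of_ne B (Ne.symm hi), eval_nil]
  · convert eval_zero (F g') with i
    split_ifs <;> simp only [eval_bind, eval_single, eval_nil,
      homBasis_single_of_ne B hg, eval_zero]

lemma lcomp_bimoduleMap (F : BimoduleTable W r s) :
    LinearMap.lcomp k A (B.bimoduleMap F) = tableMap (B.homBasis s) (B.homBasis r) F.dual :=
  (B.homBasis s).ext fun i => by rw [lcomp_bimoduleMap_homBasis, tableMap_basis]

variable [DecidableEq W] {C : CocycleTable W r s z} {F : BimoduleTable W r s}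

lemma split_of_certifies (hC : C.Certifies F) :
    (C.scalar : k) • (tableMap (Pi.basisFun k (Fin z)) (B.homBasis s) (fun i => (C.cocycle i).2) ∘ₗ
        tableMap (B.homBasis s) (Pi.basisFun k (Fin z)) C.project) +
      tableMap (B.homBasis r) (B.homBasis s) C.inverse ∘ₗ
        LinearMap.lcomp k A (B.bimoduleMap F) = (C.scalar : k) • LinearMap.id := by
  rw [lcomp_bimoduleMap, tableMap_comp, tableMap_comp, smul_tableMap_add,
    tableMap_eq_smul_id _ hC.split]

lemma finrank_ker_lcomp_of_certifies (hC : C.Certifies F) (hc : (C.scalar : k) ≠ 0) :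
    Module.finrank k (LinearMap.ker (LinearMap.lcomp k A (B.bimoduleMap F))) = z := by
  rw [finrank_ker_of_split hc ?_ ?_ (B.split_of_certifies hC), Module.finrank_fin_fun]
  · rw [lcomp_bimoduleMap, tableMap_comp, tableMap_eq_zero _ _ hC.cocycle_closed]
  · rw [tableMap_comp, tableMap_eq_smul_id _ hC.project_cocycle, Int.cast_one,
      one_smul]

lemma ker_lcomp_le_of_certifies (hC : C.Certifies F) (hc : (C.scalar : k) ≠ 0)
    {F' : BimoduleTable W t s} (hF' : ∀ i, (bind F'.dual (C.cocycle i).2).Equiv []) :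
    LinearMap.ker (LinearMap.lcomp k A (B.bimoduleMap F)) ≤
      LinearMap.ker (LinearMap.lcomp k A (B.bimoduleMap F')) := by
  refine (ker_le_range_of_split hc (B.split_of_certifies hC)).trans ?_
  rw [LinearMap.range_le_ker_iff, lcomp_bimoduleMap, tableMap_comp, tableMap_eq_zero _ _ hF']

end EnvelopingBasis

end Dual

/-! ### Splicing shifted copies of a complex -/

universe u

section Splice

/-- A complex `K` of modules together with maps `f` of degree three, which anticommute with the
differential and have square zero. If `f` identifies the homology of `K` in degrees zero and three,
the other homology of `K` being zero, then the shifted copies `K, K[4], K[8], …` are spliced along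
`f` to a resolution of the homology in degree zero. -/
structure SplicingData (R : Type*) (K : ℕ → Type*) [Ring R] [∀ n, AddCommGroup (K n)]
    [∀ n, Module R (K n)] where
  /-- The differential of the complex. -/
  d : ∀ n, K (n + 1) →ₗ[R] K n
  /-- The maps along which the shifted copies are spliced. -/
  f : ∀ n, K n →ₗ[R] K (n + 3)
  d_comp_d : ∀ n, d n ∘ₗ d (n + 1) = 0
  d_comp_f_zero : d 2 ∘ₗ f 0 = 0
  d_comp_f_add : ∀ n, d (n + 3) ∘ₗ f (n + 1) + f n ∘ₗ d n = 0
  f_comp_f : ∀ n, f (n + 3) ∘ₗ f n = 0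

namespace SplicingData

variable {R : Type u} {K : ℕ → Type u} [Ring R] [∀ n, AddCommGroup (K n)] [∀ n, Module R (K n)]

variable (R K) in
/-- The part `K (n - 4) × K (n - 8) × ⋯` in degree `n` of the spliced complex, which arises from
the copies `K[4], K[8], …`. The whole term in degree `n` is `tail R K (n + 4)`. -/
def tail : ℕ → ModuleCat.{u} R
  | 0 | 1 | 2 | 3 => ModuleCat.of R PUnit
  | n + 4 => ModuleCat.of R (K n × tail n)

variable (S : SplicingData R K)

/-- The component of the spliced differential from the copies `K[4], K[8], …` to `K`. -/
def connect : ∀ n, tail R K (n + 1) →ₗ[R] K n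
  | 0 | 1 | 2 => 0
  | n + 3 => S.f n ∘ₗ LinearMap.fst R (K n) (tail R K n)

/-- The differential of the spliced complex on the copies `K[4], K[8], …`. -/
def tailD : ∀ n, tail R K (n + 1) →ₗ[R] tail R K n
  | 0 | 1 | 2 | 3 => 0
  | n + 4 => ((S.d n).coprod (S.connect n)).prod
      (tailD n ∘ₗ LinearMap.snd R (K (n + 1)) (tail R K (n + 1)))

lemma tailD_apply (n : ℕ) (x : K (n + 1)) (y : tail R K (n + 1)) :
    S.tailD (n + 4) (x, y) = (S.d n x + S.connect n y, S.tailD n y) := rfl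

lemma f_connect (n : ℕ) (y : tail R K (n + 1)) : S.f n (S.connect n y) = 0 :=
  match n, y with
  | 0, _ | 1, _ | 2, _ => map_zero _
  | n + 3, y => LinearMap.congr_fun (S.f_comp_f n) y.1

lemma d_connect_add (n : ℕ) (y : tail R K (n + 2)) :
    S.d n (S.connect (n + 1) y) + S.connect n (S.tailD (n + 1) y) = 0 :=
  match n, y with
  | 0, _ | 1, _ => (add_zero _).trans (map_zero _)
  | 2, y => (add_zero _).trans (LinearMap.congr_fun S.d_comp_f_zero y.1)
  | n + 3, (x, y) => by
    have h := LinearMap.congr_fun (S.d_comp_f_add n) x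
    change S.d (n + 3) (S.f (n + 1) x) + S.f n (S.d n x + S.connect n y) = 0
    rwa [map_add, f_connect, add_zero]

lemma tailD_tailD (n : ℕ) (y : tail R K (n + 2)) : S.tailD n (S.tailD (n + 1) y) = 0 :=
  match n, y with
  | 0, _ | 1, _ | 2, _ | 3, _ => rfl
  | n + 4, (x, y) => by
    rw [tailD_apply (n := n + 1), tailD_apply, tailD_tailD n y, map_add, add_assoc, d_connect_add,
      add_zero, show S.d n (S.d (n + 1) x) = 0 from LinearMap.congr_fun (S.d_comp_d n) x]
    rfl

/-- The conditions under which the spliced complex is exact in positive degrees. -/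
structure IsExact : Prop where
  ker_d_le : ∀ n, n ≠ 2 → LinearMap.ker (S.d n) ≤ LinearMap.range (S.d (n + 1))
  ker_d_two_le : LinearMap.ker (S.d 2) ≤ LinearMap.range (S.d 3) ⊔ LinearMap.range (S.f 0)
  comap_f_le : (LinearMap.range (S.d 3)).comap (S.f 0) ≤ LinearMap.range (S.d 0)

variable {S}

lemma IsExact.exists_d_add_connect (hS : S.IsExact) (n : ℕ) {x : K (n + 1)} (hx : S.d n x = 0) :
    ∃ z y, S.d (n + 1) z + S.connect (n + 1) y = x ∧ S.tailD (n + 1) y = 0 := by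
  by_cases hn : n = 2
  · subst hn
    obtain ⟨_, ⟨z, rfl⟩, _, ⟨y, rfl⟩, h⟩ := Submodule.mem_sup.1 (hS.ker_d_two_le hx)
    exact ⟨z, (y, 0), h, rfl⟩
  · obtain ⟨z, rfl⟩ := hS.ker_d_le n hn hx
    exact ⟨z, 0, by rw [map_zero, add_zero], map_zero _⟩

lemma IsExact.exists_tailD_eq_mk (hS : S.IsExact) (n : ℕ) {x : K (n + 1)} {y : tail R K (n + 2)}
    (hx : S.d n x + S.connect n (S.tailD (n + 1) y) = 0) :
    ∃ p, S.tailD (n + 5) p = (x, S.tailD (n + 1) y) := by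
  have hx' : S.d n (x - S.connect (n + 1) y) = 0 := by
    rw [map_sub, sub_eq_zero, eq_neg_of_add_eq_zero_left hx,
      eq_neg_of_add_eq_zero_left (S.d_connect_add n y)]
  obtain ⟨z, y', hz, hy'⟩ := hS.exists_d_add_connect n hx'
  refine ⟨(z, y' + y), ?_⟩
  rw [tailD_apply (n := n + 1), map_add, map_add, hy', zero_add, ← add_assoc, hz, sub_add_cancel]

lemma IsExact.exists_tailD_eq_of_connect (hS : S.IsExact) (n : ℕ) {x : K (n + 1)}
    {y : tail R K (n + 1)} (hxy : S.d n x + S.connect n y = 0) (hy : S.tailD n y = 0) :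
    ∃ y', S.tailD (n + 1) y' = y :=
  match n, x, y, hxy, hy with
  | 0, _, _, _, _ | 1, _, _, _, _ | 2, _, _, _, _ => ⟨0, rfl⟩
  | 3, x, (y, _), hxy, _ => by
    obtain ⟨z, rfl⟩ := hS.comap_f_le (x := y)
      ⟨-x, (map_neg (S.d 3) x).trans (neg_eq_of_add_eq_zero_right hxy)⟩
    exact ⟨(z, 0), congrArg (·, PUnit.unit) (add_zero (S.d 0 z))⟩
  | n + 4, _, (x, y), _, hy => by
    obtain ⟨hxy, hy⟩ := Prod.ext_iff.1 hy
    obtain ⟨z, rfl⟩ := hS.exists_tailD_eq_of_connect n hxy hy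
    exact hS.exists_tailD_eq_mk n hxy

lemma IsExact.exists_tailD_eq (hS : S.IsExact) (n : ℕ) {p : tail R K (n + 5)}
    (hp : S.tailD (n + 4) p = 0) : ∃ p', S.tailD (n + 5) p' = p := by
  obtain ⟨hxy, hy⟩ := Prod.ext_iff.1 hp
  obtain ⟨z, hz⟩ := hS.exists_tailD_eq_of_connect n hxy hy
  obtain ⟨p', hp'⟩ := hS.exists_tailD_eq_mk n (x := p.1) (y := z) (by rw [hz]; exact hxy)
  exact ⟨p', by rw [hp', hz]; rfl⟩

instance projective_tail [∀ n, Module.Projective R (K n)] :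
    ∀ n, Module.Projective R (tail R K n)
  | 0 | 1 | 2 | 3 => inferInstanceAs (Module.Projective R PUnit.{u + 1})
  | n + 4 =>
    have := projective_tail n
    inferInstanceAs (Module.Projective R (K n × tail R K n))

variable (S)

/-- The spliced complex. -/
noncomputable def chain : ChainComplex (ModuleCat.{u} R) ℕ :=
  ChainComplex.of (fun n => tail R K (n + 4)) (fun n => ModuleCat.ofHom (S.tailD (n + 4)))
    fun n => ModuleCat.hom_ext (LinearMap.ext (S.tailD_tailD (n + 4)))

lemma hom_chain_d (n : ℕ) : (S.chain.d (n + 1) n).hom = S.tailD (n + 4) :=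
  congrArg ModuleCat.Hom.hom (ChainComplex.of_d (fun n => tail R K (n + 4))
    (fun n => ModuleCat.ofHom (S.tailD (n + 4))) n)

variable {S}

lemma IsExact.chain_exactAt (hS : S.IsExact) (n : ℕ) : S.chain.ExactAt (n + 1) := by
  rw [HomologicalComplex.exactAt_iff' _ (n + 2) (n + 1) n (by simp) (by simp),
    ShortComplex.moduleCat_exact_iff]
  change ∀ x : tail R K (n + 5), (S.chain.d (n + 1) n).hom x = 0 →
    ∃ y : tail R K (n + 6), (S.chain.d (n + 2) (n + 1)).hom y = x
  rw [hom_chain_d, hom_chain_d]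
  exact fun x => hS.exists_tailD_eq n

variable {M : Type u} [AddCommGroup M] [Module R M] {ε : K 0 →ₗ[R] M}

variable (S) in
/-- The augmentation of the spliced complex. -/
noncomputable def augmentation (hε : ε ∘ₗ S.d 0 = 0) :
    S.chain ⟶ (ChainComplex.single₀ (ModuleCat R)).obj (ModuleCat.of R M) :=
  (ChainComplex.toSingle₀Equiv _ _).symm
    ⟨ModuleCat.ofHom (ε ∘ₗ LinearMap.fst R (K 0) (tail R K 0)), by
      ext x
      have h : (S.chain.d 1 0).hom x = _ := LinearMap.congr_fun (S.hom_chain_d 0) x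
      exact (congrArg (fun y => ε y.1) h).trans
        ((congrArg ε (add_zero _)).trans (LinearMap.congr_fun hε _))⟩

lemma hom_augmentation_f_zero (hε : ε ∘ₗ S.d 0 = 0) :
    ((S.augmentation hε).f 0).hom = ε ∘ₗ LinearMap.fst R (K 0) (tail R K 0) :=
  congrArg ModuleCat.Hom.hom (ChainComplex.toSingle₀Equiv_symm_apply_f_zero (C := S.chain) _ _)

lemma IsExact.quasiIso_augmentation (hS : S.IsExact) (hε : ε ∘ₗ S.d 0 = 0)
    (hker : LinearMap.ker ε ≤ LinearMap.range (S.d 0)) (hsurj : Function.Surjective ε) :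
    QuasiIso (S.augmentation hε) := ⟨fun n => by
  cases n with
  | zero =>
    rw [ChainComplex.quasiIsoAt₀_iff, ShortComplex.quasiIso_iff_of_zeros' _ rfl rfl rfl]
    constructor
    · rw [ShortComplex.moduleCat_exact_iff]
      change ∀ x : K 0 × tail R K 0, ((S.augmentation hε).f 0).hom x = 0 →
        ∃ y : K 1 × tail R K 1, (S.chain.d 1 0).hom y = x
      rw [hom_chain_d, hom_augmentation_f_zero]
      rintro ⟨x, _⟩ hx
      obtain ⟨y, rfl⟩ := hker hx
      exact ⟨(y, 0), congrArg (·, PUnit.unit) (add_zero (S.d 0 y))⟩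
    · rw [ModuleCat.epi_iff_surjective]
      change Function.Surjective ((S.augmentation hε).f 0).hom
      rw [hom_augmentation_f_zero]
      exact hsurj.comp Prod.fst_surjective
  | succ n =>
    rw [quasiIsoAt_iff_exactAt']
    · exact hS.chain_exactAt n
    · exact ChainComplex.exactAt_succ_single_obj _ _⟩

/-- The projective resolution given by the spliced complex. -/
noncomputable def IsExact.resolution [∀ n, Module.Projective R (K n)] (hS : S.IsExact)
    (hε : ε ∘ₗ S.d 0 = 0) (hker : LinearMap.ker ε ≤ LinearMap.range (S.d 0))
    (hsurj : Function.Surjective ε) : ProjectiveResolution (ModuleCat.of R M) where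
  complex := S.chain
  projective n := ModuleCat.projective_of_categoryTheory_projective (tail R K (n + 4))
  π := S.augmentation hε
  quasiIso := hS.quasiIso_augmentation hε hker hsurj

end SplicingData

end Splice

/-! ### Homomorphisms from the spliced complex -/

section Hom

variable {k : Type*} {R : Type u} [Field k] [Ring R] [Algebra k R] {N : Type u} [AddCommGroup N]
  [Module k N] [Module R N] [IsScalarTower k R N]

lemma finrank_submodule_prod {V W : Type*} [AddCommGroup V] [Module k V] [AddCommGroup W]
    [Module k W] (p : Submodule k V) (q : Submodule k W) [Module.Finite k p] [Module.Finite k q] :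
    Module.finrank k (p.prod q) = Module.finrank k p + Module.finrank k q := by
  have h : p.prod q = LinearMap.range (p.subtype.prodMap q.subtype) := by
    rw [LinearMap.range_prodMap, p.range_subtype, q.range_subtype]
  rw [h, LinearMap.finrank_range_of_inj, Module.finrank_prod]
  exact p.subtype_injective.prodMap q.subtype_injective

section Product

variable {X Y X' Y' : Type*} [AddCommGroup X] [Module R X] [AddCommGroup Y] [Module R Y]
  [AddCommGroup X'] [Module R X'] [AddCommGroup Y'] [Module R Y']
  {f : X →ₗ[R] Y} {g : X' →ₗ[R] Y} {f' : X' →ₗ[R] Y'}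

lemma coprod_comp_prod_eq_zero_iff (hg : ∀ φ : Y →ₗ[R] N, φ ∘ₗ f = 0 → φ ∘ₗ g = 0)
    (φ : Y →ₗ[R] N) (ψ : Y' →ₗ[R] N) :
    φ.coprod ψ ∘ₗ (f.coprod g).prod (f' ∘ₗ LinearMap.snd R X X') = 0 ↔
      φ ∘ₗ f = 0 ∧ ψ ∘ₗ f' = 0 := by
  have h : φ.coprod ψ ∘ₗ (f.coprod g).prod (f' ∘ₗ LinearMap.snd R X X') =
      (φ ∘ₗ f).coprod (φ ∘ₗ g + ψ ∘ₗ f') := by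
    ext x <;> simp
  rw [h, LinearMap.prod_ext_iff, LinearMap.coprod_inl, LinearMap.coprod_inr, LinearMap.zero_comp,
    LinearMap.zero_comp]
  exact and_congr_right fun hφ => by rw [hg φ hφ, zero_add]

lemma finrank_ker_lcomp_prod [Module.Finite k (Y →ₗ[R] N)] [Module.Finite k (Y' →ₗ[R] N)]
    (hg : ∀ φ : Y →ₗ[R] N, φ ∘ₗ f = 0 → φ ∘ₗ g = 0) :
    Module.finrank k (LinearMap.ker
        (LinearMap.lcomp k N ((f.coprod g).prod (f' ∘ₗ LinearMap.snd R X X')))) =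
      Module.finrank k (LinearMap.ker (LinearMap.lcomp k N f)) +
        Module.finrank k (LinearMap.ker (LinearMap.lcomp k N f')) := by
  have key : LinearMap.ker
      (LinearMap.lcomp k N ((f.coprod g).prod (f' ∘ₗ LinearMap.snd R X X'))) =
      ((LinearMap.ker (LinearMap.lcomp k N f)).prod (LinearMap.ker (LinearMap.lcomp k N f'))).map
        (LinearMap.coprodEquiv k (R := R) (M := Y) (M₂ := Y') (M₃ := N)).toLinearMap := by
    ext φ
    obtain ⟨⟨α, β⟩, rfl⟩ := (LinearMap.coprodEquiv k).surjective φ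
    rw [Submodule.mem_map_equiv, LinearEquiv.symm_apply_apply]
    exact coprod_comp_prod_eq_zero_iff hg α β
  rw [key, LinearEquiv.finrank_map_eq, finrank_submodule_prod]

end Product

namespace SplicingData

variable {K : ℕ → Type u} [∀ n, AddCommGroup (K n)] [∀ n, Module R (K n)]

variable {S : SplicingData R K}

lemma comp_connect_eq_zero
    (hf : ∀ n, LinearMap.ker (LinearMap.lcomp k N (S.d (n + 3))) ≤
      LinearMap.ker (LinearMap.lcomp k N (S.f n))) :
    ∀ (n : ℕ) (φ : K n →ₗ[R] N), φ ∘ₗ S.d n = 0 → φ ∘ₗ S.connect n = 0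
  | 0, φ, _ | 1, φ, _ | 2, φ, _ => φ.comp_zero
  | n + 3, φ, hφ => by
    have h : φ ∘ₗ S.f n = 0 := hf n hφ
    change (φ ∘ₗ S.f n) ∘ₗ LinearMap.fst R (K n) (tail R K n) = 0
    rw [h, LinearMap.zero_comp]

lemma finrank_tail_hom_of_lt {n : ℕ} (hn : n < 4) :
    Module.finrank k (tail R K n →ₗ[R] N) = 0 := by
  interval_cases n <;> exact Module.finrank_zero_of_subsingleton (M := PUnit.{u + 1} →ₗ[R] N)

variable [∀ n, Module.Finite k (K n →ₗ[R] N)]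

instance finite_tail_hom : ∀ n, Module.Finite k (tail R K n →ₗ[R] N)
  | 0 | 1 | 2 | 3 => inferInstanceAs (Module.Finite k (PUnit.{u + 1} →ₗ[R] N))
  | n + 4 =>
    have := finite_tail_hom n
    Module.Finite.equiv (LinearMap.coprodEquiv k (R := R) (M := K n) (M₂ := tail R K n) (M₃ := N))

lemma finrank_tail_hom_add_four (n : ℕ) :
    Module.finrank k (tail R K (n + 4) →ₗ[R] N) =
      Module.finrank k (K n →ₗ[R] N) + Module.finrank k (tail R K n →ₗ[R] N) := by
  rw [← Module.finrank_prod]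
  exact (LinearMap.coprodEquiv k (R := R) (M := K n) (M₂ := tail R K n)
    (M₃ := N)).finrank_eq.symm

lemma finrank_ker_lcomp_tailD_of_lt (S : SplicingData R K) {n : ℕ} (hn : n < 4) :
    Module.finrank k (LinearMap.ker (LinearMap.lcomp k N (S.tailD n))) = 0 :=
  Nat.le_zero.1 ((Submodule.finrank_le _).trans_eq (finrank_tail_hom_of_lt hn))

lemma finrank_ker_lcomp_tailD_add_four
    (hf : ∀ n, LinearMap.ker (LinearMap.lcomp k N (S.d (n + 3))) ≤
      LinearMap.ker (LinearMap.lcomp k N (S.f n))) (n : ℕ) :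
    Module.finrank k (LinearMap.ker (LinearMap.lcomp k N (S.tailD (n + 4)))) =
      Module.finrank k (LinearMap.ker (LinearMap.lcomp k N (S.d n))) +
        Module.finrank k (LinearMap.ker (LinearMap.lcomp k N (S.tailD n))) :=
  finrank_ker_lcomp_prod (comp_connect_eq_zero hf n)

end SplicingData

end Hom

section Cohomology

lemma finrank_homology {k : Type u} [Field k] (S : ShortComplex (ModuleCat.{u} k))
    [Module.Finite k S.X₁] [Module.Finite k S.X₂] :
    Module.finrank k S.homology + Module.finrank k S.X₁ =
      Module.finrank k (LinearMap.ker S.g.hom) + Module.finrank k (LinearMap.ker S.f.hom) := by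
  rw [S.moduleCatHomologyIso.toLinearEquiv.finrank_eq,
    ← LinearMap.finrank_range_add_finrank_ker S.moduleCatToCycles, ← add_assoc,
    show LinearMap.ker S.moduleCatToCycles = LinearMap.ker S.f.hom from
      LinearMap.ker_codRestrict _ _ _]
  congr 1
  exact Submodule.finrank_quotient_add_finrank (LinearMap.range S.moduleCatToCycles)

variable {k R N : Type u} [Field k] [Ring R] [Algebra k R] [AddCommGroup N]
  [Module k N] [Module R N] [IsScalarTower k R N] (C : ChainComplex (ModuleCat.{u} R) ℕ)

variable (k N) in
/-- The terms of the complex of homomorphisms from `C` to `N`. -/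
noncomputable def linearYonedaObjEquiv (n : ℕ) :
    (C.linearYonedaObj k (ModuleCat.of R N)).X n ≃ₗ[k] (C.X n →ₗ[R] N) where
  toFun (φ : C.X n ⟶ ModuleCat.of R N) := φ.hom
  invFun φ := (ModuleCat.ofHom φ : C.X n ⟶ ModuleCat.of R N)
  map_add' _ _ := rfl
  map_smul' c (φ : C.X n ⟶ ModuleCat.of R N) :=
    LinearMap.ext fun x => algebraMap_smul R c (φ.hom x : N)

lemma finrank_ker_linearYonedaObj_d (n : ℕ) :
    Module.finrank k (LinearMap.ker ((C.linearYonedaObj k (ModuleCat.of R N)).d n (n + 1)).hom) =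
      Module.finrank k (LinearMap.ker (LinearMap.lcomp k N (C.d (n + 1) n).hom)) := by
  have key : LinearMap.ker (LinearMap.lcomp k N (C.d (n + 1) n).hom) =
      (LinearMap.ker ((C.linearYonedaObj k (ModuleCat.of R N)).d n (n + 1)).hom).map
        (linearYonedaObjEquiv k N C n).toLinearMap := by
    ext φ
    obtain ⟨φ, rfl⟩ := (linearYonedaObjEquiv k N C n).surjective φ
    rw [Submodule.mem_map_equiv, LinearEquiv.symm_apply_apply]
    exact (linearYonedaObjEquiv k N C (n + 1)).map_eq_zero_iff
  rw [key, LinearEquiv.finrank_map_eq]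

variable [∀ n, Module.Finite k (C.X n →ₗ[R] N)]

instance (n : ℕ) : Module.Finite k ((C.linearYonedaObj k (ModuleCat.of R N)).X n) :=
  Module.Finite.equiv (linearYonedaObjEquiv k N C n).symm

lemma finrank_linearYonedaObj_homology_zero :
    Module.finrank k ((C.linearYonedaObj k (ModuleCat.of R N)).homology 0) =
      Module.finrank k (LinearMap.ker (LinearMap.lcomp k N (C.d 1 0).hom)) := by
  set D := C.linearYonedaObj k (ModuleCat.of R N)
  have : Module.Finite k (D.sc' 0 0 1).X₁ := inferInstanceAs (Module.Finite k (D.X 0))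
  have : Module.Finite k (D.sc' 0 0 1).X₂ := inferInstanceAs (Module.Finite k (D.X 0))
  have key := finrank_homology (D.sc' 0 0 1)
  have h0 : LinearMap.ker (D.sc' 0 0 1).f.hom = ⊤ := by
    change LinearMap.ker (D.d 0 0).hom = ⊤
    rw [D.shape 0 0 (by simp), ModuleCat.hom_zero, LinearMap.ker_zero]
  rw [h0, finrank_top] at key
  rw [← finrank_ker_linearYonedaObj_d,
    (D.homologyIsoSc' 0 0 1 (by simp) (by simp)).toLinearEquiv.finrank_eq]
  exact Nat.add_right_cancel key

lemma finrank_linearYonedaObj_homology_succ (n : ℕ) :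
    Module.finrank k ((C.linearYonedaObj k (ModuleCat.of R N)).homology (n + 1)) +
        Module.finrank k (C.X n →ₗ[R] N) =
      Module.finrank k (LinearMap.ker (LinearMap.lcomp k N (C.d (n + 2) (n + 1)).hom)) +
        Module.finrank k (LinearMap.ker (LinearMap.lcomp k N (C.d (n + 1) n).hom)) := by
  set D := C.linearYonedaObj k (ModuleCat.of R N)
  rw [← finrank_ker_linearYonedaObj_d, ← finrank_ker_linearYonedaObj_d,
    ← (linearYonedaObjEquiv k N C n).finrank_eq,
    (D.homologyIsoSc' n (n + 1) (n + 2) (by simp) (by simp)).toLinearEquiv.finrank_eq]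
  have : Module.Finite k (D.sc' n (n + 1) (n + 2)).X₁ := inferInstanceAs (Module.Finite k (D.X n))
  have : Module.Finite k (D.sc' n (n + 1) (n + 2)).X₂ :=
    inferInstanceAs (Module.Finite k (D.X (n + 1)))
  exact finrank_homology (D.sc' n (n + 1) (n + 2))

end Cohomology

/-! ### The monomial basis of `FK(3)` -/

/-- The words forming a basis of `FK(3)`. -/
inductive Word
  | one | a | b | c | ab | bc | ba | ac | aba | abc | bac | abac
  deriving DecidableEq

namespace Word

instance : One Word := ⟨one⟩

instance : Fintype Word :=
  .ofList [one, a, b, c, ab, bc, ba, ac, aba, abc, bac, abac] (by rintro ⟨⟩ <;> decide)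

/-- The structure constants of `FK(3)`. -/
def mul : Word → Word → Comb Word
  | one, v => [(1, v)]
  | u, one => [(1, u)]
  | a, b => [(1, ab)]
  | a, c => [(1, ac)]
  | a, bc => [(1, abc)]
  | a, ba => [(1, aba)]
  | a, bac => [(1, abac)]
  | b, a => [(1, ba)]
  | b, c => [(1, bc)]
  | b, ab => [(1, aba)]
  | b, ac => [(1, bac)]
  | b, abc => [(1, abac)]
  | c, a => [(-1, ab), (-1, bc)]
  | c, b => [(-1, ba), (-1, ac)]
  | c, ab => [(1, bac)]
  | c, bc => [(-1, bac)]
  | c, ba => [(1, abc)]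
  | c, ac => [(-1, abc)]
  | c, aba => [(-1, abac)]
  | ab, a => [(1, aba)]
  | ab, c => [(1, abc)]
  | ab, ac => [(1, abac)]
  | bc, a => [(-1, aba)]
  | bc, b => [(-1, bac)]
  | bc, ba => [(1, abac)]
  | bc, ac => [(-1, abac)]
  | ba, b => [(1, aba)]
  | ba, c => [(1, bac)]
  | ba, bc => [(1, abac)]
  | ac, a => [(-1, abc)]
  | ac, b => [(-1, aba)]
  | ac, ab => [(1, abac)]
  | ac, bc => [(-1, abac)]
  | aba, c => [(1, abac)]
  | abc, b => [(-1, abac)]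
  | bac, a => [(-1, abac)]
  | _, _ => []

instance : StructureConstants Word where
  mul := mul
  one_mul w := by cases w <;> rfl
  mul_one w := by cases w <;> rfl

/-- The letter corresponding to a generator. -/
def letter : Fin 3 → Word := ![a, b, c]

/-- The generators spelling a word. -/
def spelling : Word → List (Fin 3)
  | one => []
  | a => [0]
  | b => [1]
  | c => [2]
  | ab => [0, 1]
  | bc => [1, 2]
  | ba => [1, 0]
  | ac => [0, 2]
  | aba => [0, 1, 0]
  | abc => [0, 1, 2]
  | bac => [1, 0, 2]
  | abac => [0, 1, 0, 2]

lemma spelling_foldr_mul (u v : Word) :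
    ((spelling u).foldr (fun i => Comb.bind (mul (letter i))) [(1, v)]).Equiv (mul u v) := by
  decide +revert +kernel

end Word

/-- The generators of `FK(3)`. -/
noncomputable def gen (i : Fin 3) : FK3 k := RingQuot.mkAlgHom k (FKRel k) (ι k i)

/-- The basis elements of `FK(3)`. -/
noncomputable def monomial (w : Word) : FK3 k := (w.spelling.map (gen k)).prod

lemma monomial_one : monomial k 1 = 1 := rfl

lemma letter_mul_word {A : Type*} [Ring A] {x : Fin 3 → A} (hx : ∀ i, x i * x i = 0)
    (r₁ : x 0 * x 1 + x 1 * x 2 + x 2 * x 0 = 0) (r₂ : x 1 * x 0 + x 0 * x 2 + x 2 * x 1 = 0)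
    (i : Fin 3) (v : Word) :
    x i * (v.spelling.map x).prod =
      eval (fun w : Word => (w.spelling.map x).prod) (Word.mul (Word.letter i) v) := by
  have ca : x 2 * x 0 = -(x 0 * x 1) + -(x 1 * x 2) := by rw [← sub_eq_zero, ← r₁]; abel
  have cb : x 2 * x 1 = -(x 1 * x 0) + -(x 0 * x 2) := by rw [← sub_eq_zero, ← r₂]; abel
  have xx (i) (y : A) : x i * (x i * y) = 0 := by rw [← mul_assoc, hx, zero_mul]
  have ca' (y : A) : x 2 * (x 0 * y) = -(x 0 * (x 1 * y)) + -(x 1 * (x 2 * y)) := by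
    rw [← mul_assoc, ca, add_mul, neg_mul, neg_mul, mul_assoc, mul_assoc]
  have cb' (y : A) : x 2 * (x 1 * y) = -(x 1 * (x 0 * y)) + -(x 0 * (x 2 * y)) := by
    rw [← mul_assoc, cb, add_mul, neg_mul, neg_mul, mul_assoc, mul_assoc]
  have bab : x 1 * (x 0 * x 1) = x 0 * (x 1 * x 0) := by
    have h := ca' (x 0)
    rw [hx, mul_zero, ca, mul_add, mul_neg, mul_neg, xx, neg_zero, add_zero, neg_neg] at h
    rw [eq_comm, ← sub_eq_zero, ← neg_eq_zero, h]
    abel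
  have bab' (y : A) : x 1 * (x 0 * (x 1 * y)) = x 0 * (x 1 * (x 0 * y)) := by
    rw [← mul_assoc (x 0), ← mul_assoc, bab, mul_assoc, mul_assoc]
  fin_cases i <;> cases v <;>
    simp [Word.mul, Word.letter, Word.spelling, hx, ca, cb, xx, ca', cb', bab, bab', mul_add]

lemma gen_mul_monomial (i : Fin 3) (v : Word) :
    gen k i * monomial k v = eval (monomial k) (Word.mul (Word.letter i) v) := by
  refine letter_mul_word ?_ ?_ ?_ i v
  · intro i
    fin_cases i
    · simpa [gen] using RingQuot.mkAlgHom_rel k (FKRel.sq_a (k := k))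
    · simpa [gen] using RingQuot.mkAlgHom_rel k (FKRel.sq_b (k := k))
    · simpa [gen] using RingQuot.mkAlgHom_rel k (FKRel.sq_c (k := k))
  · simpa [gen] using RingQuot.mkAlgHom_rel k (FKRel.rel1 (k := k))
  · simpa [gen] using RingQuot.mkAlgHom_rel k (FKRel.rel2 (k := k))

lemma prod_mul_eval (w : List (Fin 3)) (L : Comb Word) :
    (w.map (gen k)).prod * eval (monomial k) L =
      eval (monomial k) (w.foldr (fun i => bind (Word.mul (Word.letter i))) L) := by
  induction w with
  | nil => rw [List.map_nil, List.prod_nil, one_mul, List.foldr_nil]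
  | cons i w ih =>
    rw [List.map_cons, List.prod_cons, mul_assoc, ih, List.foldr_cons, eval_bind]
    exact (map_eval (AddMonoidHom.mulLeft (gen k i)) _ _).trans
      (congrArg (eval · _) (funext (gen_mul_monomial k i)))

lemma monomial_mul_monomial (u v : Word) : monomial k u * monomial k v =
    eval (monomial k) (StructureConstants.mul u v) := by
  have h := prod_mul_eval k u.spelling [(1, v)]
  rwa [(Word.spelling_foldr_mul u v).eval_eq, eval_single] at h

/-- Left multiplication by a generator on the vector space spanned by the words. -/
noncomputable def leftMul (i : Fin 3) : Module.End k (Word →₀ k) :=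
  Finsupp.linearCombination k fun v => eval (Finsupp.single · 1) (Word.mul (Word.letter i) v)

lemma leftMul_single (i : Fin 3) (v : Word) :
    leftMul k i (Finsupp.single v 1) =
      eval (Finsupp.single · 1) (Word.mul (Word.letter i) v) := by
  rw [leftMul, Finsupp.linearCombination_single, one_smul]

lemma leftMul_leftMul_single (i j : Fin 3) (v : Word) :
    leftMul k i (leftMul k j (Finsupp.single v 1)) =
      eval (Finsupp.single · 1)
        (bind (Word.mul (Word.letter i)) (Word.mul (Word.letter j) v)) := by
  rw [leftMul_single, map_eval, eval_bind]
  simp only [leftMul_single]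

lemma leftMul_mul_self (i : Fin 3) : leftMul k i * leftMul k i = 0 := by
  refine Finsupp.lhom_ext' fun v => LinearMap.ext_ring ?_
  refine (leftMul_leftMul_single k i i v).trans ?_
  have h : bind (Word.mul (Word.letter i)) (Word.mul (Word.letter i) v) |>.Equiv [] := by
    decide +revert +kernel
  rw [h.eval_eq, eval_nil]
  rfl

lemma leftMul_cyclic {i j l : Fin 3}
    (h : ∀ v, (addScaled 1 (bind (Word.mul (Word.letter i)) (Word.mul (Word.letter j) v))
      (addScaled 1 (bind (Word.mul (Word.letter j)) (Word.mul (Word.letter l) v))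
        (bind (Word.mul (Word.letter l)) (Word.mul (Word.letter i) v)))).Equiv []) :
    leftMul k i * leftMul k j + leftMul k j * leftMul k l + leftMul k l * leftMul k i = 0 := by
  refine Finsupp.lhom_ext' fun v => LinearMap.ext_ring ?_
  have key := (h v).eval_eq (Finsupp.single · (1 : k))
  rw [eval_addScaled, eval_addScaled, one_smul, one_smul, ← leftMul_leftMul_single,
    ← leftMul_leftMul_single, ← leftMul_leftMul_single, ← add_assoc] at key
  exact key

/-- The left regular representation of `FK(3)`. -/
noncomputable def regular : FK3 k →ₐ[k] Module.End k (Word →₀ k) :=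
  RingQuot.liftAlgHom k ⟨FreeAlgebra.lift k (leftMul k), by
    intro x y h
    cases h <;> simp only [map_add, map_mul, map_zero, FreeAlgebra.lift_ι_apply]
    · exact leftMul_mul_self k 0
    · exact leftMul_mul_self k 1
    · exact leftMul_mul_self k 2
    · exact leftMul_cyclic k (by decide +kernel)
    · exact leftMul_cyclic k (by decide +kernel)⟩

lemma regular_gen (i : Fin 3) : regular k (gen k i) = leftMul k i := by
  simp [regular, gen, RingQuot.liftAlgHom_mkAlgHom_apply]

lemma regular_monomial (w : Word) :
    regular k (monomial k w) (Finsupp.single Word.one 1) = Finsupp.single w 1 := by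
  cases w <;>
    simp [monomial, Word.spelling, regular_gen, leftMul_single, Word.letter, Word.mul]

lemma linearIndependent_monomial : LinearIndependent k (monomial k) := by
  refine LinearIndependent.of_comp
    ((LinearMap.applyₗ (Finsupp.single Word.one 1)).comp (regular k).toLinearMap) ?_
  convert (Finsupp.basisSingleOne (R := k) (ι := Word)).linearIndependent using 1
  ext1 w
  rw [Finsupp.coe_basisSingleOne]
  exact regular_monomial k w

lemma gen_mul_mem_span (i : Fin 3) {x : FK3 k}
    (hx : x ∈ Submodule.span k (Set.range (monomial k))) :
    gen k i * x ∈ Submodule.span k (Set.range (monomial k)) := by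
  induction hx using Submodule.span_induction with
  | mem x hx =>
    obtain ⟨v, rfl⟩ := hx
    rw [gen_mul_monomial]
    exact eval_mem _ (fun w => Submodule.subset_span (Set.mem_range_self w)) _
  | zero => rw [mul_zero]; exact zero_mem _
  | add x y _ _ hx hy => rw [mul_add]; exact add_mem hx hy
  | smul c x _ hx => rw [mul_smul_comm]; exact Submodule.smul_mem _ c hx

lemma mkAlgHom_mul_mem_span (y : FreeAlgebra k (Fin 3)) :
    ∀ x ∈ Submodule.span k (Set.range (monomial k)),
      RingQuot.mkAlgHom k (FKRel k) y * x ∈ Submodule.span k (Set.range (monomial k)) := by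
  induction y using FreeAlgebra.induction with
  | grade0 c =>
    intro x hx
    rw [AlgHom.commutes, ← Algebra.smul_def]
    exact Submodule.smul_mem _ c hx
  | grade1 i => exact fun x hx => gen_mul_mem_span k i hx
  | mul y z hy hz =>
    intro x hx
    rw [map_mul, mul_assoc]
    exact hy _ (hz _ hx)
  | add y z hy hz =>
    intro x hx
    rw [map_add, add_mul]
    exact add_mem (hy _ hx) (hz _ hx)

lemma span_monomial : ⊤ ≤ Submodule.span k (Set.range (monomial k)) := by
  intro x _
  obtain ⟨y, rfl⟩ := RingQuot.mkAlgHom_surjective k (FKRel k) x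
  have h := mkAlgHom_mul_mem_span k y (monomial k 1) (Submodule.subset_span (Set.mem_range_self 1))
  rwa [monomial_one, mul_one] at h

/-- The basis of `FK(3)` consisting of the words. -/
noncomputable def wordBasis : Module.Basis Word k (FK3 k) :=
  .mk (linearIndependent_monomial k) (span_monomial k)

lemma coe_wordBasis : ⇑(wordBasis k) = monomial k := Module.Basis.coe_mk _ _

instance : IsScalarTower k (FKAe k) (FK3 k) where
  smul_assoc c x m := by
    induction x using TensorProduct.induction_on with
    | zero => exact (congrArg (· • m) (smul_zero c)).trans <| (zero_smul (FKAe k) m).trans <|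
        (smul_zero c).symm.trans (congrArg (c • ·) (zero_smul (FKAe k) m).symm)
    | tmul a b =>
      rw [TensorProduct.smul_tmul', TensorProduct.Algebra.smul_def, TensorProduct.Algebra.smul_def,
        smul_assoc]
    | add x y hx hy => rw [smul_add, add_smul, add_smul, hx, hy, smul_add]

lemma Comb.eval_tmul_eval {S M N ι κ : Type*} [CommRing S] [AddCommGroup M] [Module S M]
    [AddCommGroup N] [Module S N] (φ : ι → M) (ψ : κ → N) (L : Comb ι) (L' : Comb κ) :
    eval φ L ⊗ₜ[S] eval ψ L' = eval (fun i => eval (fun j => φ i ⊗ₜ[S] ψ j) L') L := by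
  have h (i : ι) : eval (fun j => φ i ⊗ₜ[S] ψ j) L' = φ i ⊗ₜ[S] eval ψ L' :=
    (map_eval (TensorProduct.mk S M N (φ i)) ψ L').symm
  simp only [h]
  exact map_eval ((TensorProduct.mk S M N).flip (eval ψ L')) φ L

/-- The words form a basis of `FK(3)`, and their tensor products a basis of the enveloping
algebra. -/
noncomputable def envelopingBasis : EnvelopingBasis k (FKAe k) (FK3 k) Word where
  word := wordBasis k
  pair := (wordBasis k).tensorProduct ((wordBasis k).map (MulOpposite.opLinearEquiv k))
  pair_one := by
    rw [Module.Basis.tensorProduct_apply, Module.Basis.map_apply, coe_wordBasis, monomial_one]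
    rfl
  pair_mul_pair u v u' v' := by
    simp only [Module.Basis.tensorProduct_apply, Module.Basis.map_apply, coe_wordBasis]
    rw [Algebra.TensorProduct.tmul_mul_tmul, ← eval_tmul_eval, ← map_eval,
      ← monomial_mul_monomial, ← monomial_mul_monomial]
    rfl
  pair_smul_word u v w := by
    simp only [Module.Basis.tensorProduct_apply, Module.Basis.map_apply, coe_wordBasis]
    simp only [← monomial_mul_monomial]
    refine .trans ?_ (map_eval (AddMonoidHom.mulRight (monomial k v)) _ _)
    rw [← monomial_mul_monomial]
    exact (mul_assoc _ _ _).symm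

/-! ### The bimodule Koszul complex of `FK(3)` -/

section Tables

/- A term `(c, h, u, v)` of a table is `c` times `u ⊗ v` in the summand `h`. Given the differentials
and the maps `f`, the identities required of the homotopies and of the cocycle certificates are
linear equations, and the tables are integral solutions of them. The factors 18 and `scalar` clear
the denominators. -/

open Word

/-- The differential `K₁ → K₀` of the bimodule Koszul complex `K` of `FK(3)`. -/
def d₀ : BimoduleTable Word 3 1 :=
  ![[(-1, 0, 1, a), (1, 0, a, 1)],
    [(-1, 0, 1, b), (1, 0, b, 1)],
    [(-1, 0, 1, c), (1, 0, c, 1)]]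

/-- The differential `K₂ → K₁`. -/
def d₁ : BimoduleTable Word 5 3 :=
  ![[(1, 0, 1, a), (1, 0, a, 1)],
    [(1, 1, 1, b), (1, 1, b, 1)],
    [(1, 2, 1, c), (1, 2, c, 1)],
    [(1, 0, 1, b), (1, 0, c, 1), (1, 1, 1, c), (1, 1, a, 1), (1, 2, 1, a), (1, 2, b, 1)],
    [(1, 0, 1, c), (1, 0, b, 1), (1, 1, 1, a), (1, 1, c, 1), (1, 2, 1, b), (1, 2, a, 1)]]

/-- The differential `K₃ → K₂`. -/
def d₂ : BimoduleTable Word 6 5 :=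
  ![[(-1, 0, 1, a), (1, 0, a, 1)],
    [(-1, 1, 1, b), (1, 1, b, 1)],
    [(-1, 2, 1, c), (1, 2, c, 1)],
    [(-1, 0, 1, a), (-1, 0, 1, b), (-1, 0, 1, c), (1, 0, a, 1), (1, 0, b, 1), (1, 0, c, 1),
     (-1, 1, 1, a), (-1, 1, 1, b), (-1, 1, 1, c), (1, 1, a, 1), (1, 1, b, 1), (1, 1, c, 1),
     (-1, 2, 1, a), (-1, 2, 1, b), (-1, 2, 1, c), (1, 2, a, 1), (1, 2, b, 1), (1, 2, c, 1),
     (-1, 3, 1, a), (-1, 3, 1, b), (-1, 3, 1, c), (1, 3, a, 1), (1, 3, b, 1), (1, 3, c, 1),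
     (-1, 4, 1, a), (-1, 4, 1, b), (-1, 4, 1, c), (1, 4, a, 1), (1, 4, b, 1), (1, 4, c, 1)],
    [(-1, 0, 1, a), (1, 0, 1, b), (1, 0, a, 1), (-1, 0, b, 1), (-1, 1, 1, a), (1, 1, 1, b),
     (1, 1, a, 1), (-1, 1, b, 1), (-1, 2, 1, a), (1, 2, 1, b), (1, 2, a, 1), (-1, 2, b, 1),
     (-1, 3, 1, b), (1, 3, 1, c), (-1, 3, a, 1), (1, 3, c, 1), (1, 4, 1, a), (-1, 4, 1, c),
     (1, 4, b, 1), (-1, 4, c, 1)],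
    [(-1, 0, 1, b), (1, 0, 1, c), (1, 0, b, 1), (-1, 0, c, 1), (-1, 1, 1, b), (1, 1, 1, c),
     (1, 1, b, 1), (-1, 1, c, 1), (-1, 2, 1, b), (1, 2, 1, c), (1, 2, b, 1), (-1, 2, c, 1),
     (1, 3, 1, a), (-1, 3, 1, c), (1, 3, a, 1), (-1, 3, b, 1), (-1, 4, 1, a), (1, 4, 1, b),
     (-1, 4, a, 1), (1, 4, c, 1)]]

/-- The differential `K₂ₙ → K₂ₙ₋₁` for `n ≥ 2`; the complex `K` is periodic from degree three on. -/
def dEven : BimoduleTable Word 6 6 :=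
  ![[(1, 0, 1, a), (1, 0, a, 1)],
    [(1, 1, 1, b), (1, 1, b, 1)],
    [(1, 2, 1, c), (1, 2, c, 1)],
    [(1, 3, 1, a), (1, 3, 1, b), (1, 3, 1, c), (1, 3, a, 1), (1, 3, b, 1), (1, 3, c, 1)],
    [(-1, 4, 1, a), (1, 4, 1, b), (-1, 4, a, 1), (1, 4, c, 1), (-1, 5, 1, a), (1, 5, 1, c),
     (-1, 5, b, 1), (1, 5, c, 1)],
    [(-1, 4, 1, a), (1, 4, 1, c), (-1, 4, a, 1), (1, 4, b, 1), (-1, 5, 1, b), (1, 5, 1, c),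
     (-1, 5, a, 1), (1, 5, c, 1)]]

/-- The differential `K₂ₙ₊₁ → K₂ₙ` for `n ≥ 2`. -/
def dOdd : BimoduleTable Word 6 6 :=
  ![[(-1, 0, 1, a), (1, 0, a, 1)],
    [(-1, 1, 1, b), (1, 1, b, 1)],
    [(-1, 2, 1, c), (1, 2, c, 1)],
    [(-1, 3, 1, a), (-1, 3, 1, b), (-1, 3, 1, c), (1, 3, a, 1), (1, 3, b, 1), (1, 3, c, 1)],
    [(-1, 4, 1, b), (1, 4, 1, c), (-1, 4, a, 1), (1, 4, c, 1), (1, 5, 1, a), (-1, 5, 1, c),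
     (1, 5, b, 1), (-1, 5, c, 1)],
    [(1, 4, 1, a), (-1, 4, 1, c), (1, 4, a, 1), (-1, 4, b, 1), (-1, 5, 1, a), (1, 5, 1, b),
     (-1, 5, a, 1), (1, 5, c, 1)]]

/-- The map `K₀ → K₃` which embeds the algebra as the homology of `K` in degree three. -/
def f₀ : BimoduleTable Word 1 6 :=
  ![[(-9, 0, 1, aba), (9, 0, 1, abc), (-18, 0, 1, bac), (9, 0, a, bc), (-9, 0, a, ba),
     (-9, 0, a, ac), (18, 0, b, ab), (18, 0, b, bc), (9, 0, b, ac), (9, 0, c, ab), (-18, 0, c, ba),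
     (-9, 0, ab, b), (-18, 0, ab, c), (9, 0, bc, a), (-9, 0, bc, b), (-9, 0, ba, a), (9, 0, ba, c),
     (-9, 0, ac, a), (-18, 0, ac, b), (-9, 0, aba, 1), (9, 0, abc, 1), (-18, 0, bac, 1),
     (-9, 1, 1, aba), (-18, 1, 1, abc), (9, 1, 1, bac), (9, 1, a, bc), (18, 1, a, ba),
     (18, 1, a, ac), (-9, 1, b, ab), (-9, 1, b, bc), (9, 1, b, ac), (-18, 1, c, ab), (9, 1, c, ba),
     (-9, 1, ab, b), (9, 1, ab, c), (-18, 1, bc, a), (-9, 1, bc, b), (-9, 1, ba, a),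
     (-18, 1, ba, c), (-9, 1, ac, a), (9, 1, ac, b), (-9, 1, aba, 1), (-18, 1, abc, 1),
     (9, 1, bac, 1), (18, 2, 1, aba), (9, 2, 1, abc), (9, 2, 1, bac), (-18, 2, a, bc),
     (-9, 2, a, ba), (-9, 2, a, ac), (-9, 2, b, ab), (-9, 2, b, bc), (-18, 2, b, ac), (9, 2, c, ab),
     (9, 2, c, ba), (18, 2, ab, b), (9, 2, ab, c), (9, 2, bc, a), (18, 2, bc, b), (18, 2, ba, a),
     (9, 2, ba, c), (18, 2, ac, a), (9, 2, ac, b), (18, 2, aba, 1), (9, 2, abc, 1), (9, 2, bac, 1),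
     (-2, 3, 1, aba), (2, 3, 1, abc), (2, 3, 1, bac), (-3, 3, a, ab), (-1, 3, a, bc), (1, 3, a, ba),
     (-2, 3, a, ac), (1, 3, b, ab), (-2, 3, b, bc), (-3, 3, b, ba), (-1, 3, b, ac), (2, 3, c, ab),
     (3, 3, c, bc), (2, 3, c, ba), (3, 3, c, ac), (3, 3, ab, a), (-2, 3, ab, b), (-1, 3, ab, c),
     (2, 3, bc, a), (1, 3, bc, b), (-3, 3, bc, c), (-2, 3, ba, a), (3, 3, ba, b), (-1, 3, ba, c),
     (1, 3, ac, a), (2, 3, ac, b), (-3, 3, ac, c), (-2, 3, aba, 1), (2, 3, abc, 1), (2, 3, bac, 1),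
     (2, 4, 1, aba), (-2, 4, 1, abc), (4, 4, 1, bac), (2, 4, a, bc), (-2, 4, a, ba), (-2, 4, a, ac),
     (-4, 4, b, bc), (4, 4, b, ba), (-2, 4, b, ac), (-6, 4, c, ab), (-4, 4, c, bc), (4, 4, c, ba),
     (4, 4, c, ac), (6, 4, ab, b), (2, 4, bc, a), (2, 4, bc, b), (-4, 4, bc, c), (-2, 4, ba, a),
     (4, 4, ba, b), (-2, 4, ba, c), (-2, 4, ac, a), (4, 4, ac, b), (4, 4, ac, c), (2, 4, aba, 1),
     (-2, 4, abc, 1), (4, 4, bac, 1), (4, 5, 1, aba), (2, 5, 1, abc), (2, 5, 1, bac), (4, 5, a, ab),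
     (-2, 5, a, ba), (-6, 5, a, ac), (-2, 5, b, ab), (-6, 5, b, bc), (4, 5, b, ba), (-2, 5, c, ab),
     (-2, 5, c, ba), (4, 5, ab, a), (4, 5, ab, b), (-2, 5, ab, c), (6, 5, bc, a), (4, 5, ba, a),
     (4, 5, ba, b), (-2, 5, ba, c), (6, 5, ac, b), (4, 5, aba, 1), (2, 5, abc, 1), (2, 5, bac, 1)]]

/-- The component `K₁ → K₄` of an extension of `f₀` to a map of degree three on `K`. -/
def f₁ : BimoduleTable Word 3 6 :=
  ![[(18, 0, 1, bac), (-18, 0, b, ab), (-9, 0, b, bc), (9, 0, c, ba), (-9, 0, c, ac),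
     (-18, 0, ab, c), (-9, 0, bc, c), (9, 0, ba, b), (-9, 0, ac, b), (-18, 0, bac, 1),
     (-9, 1, 1, abc), (18, 1, a, ba), (-9, 1, a, ac), (-18, 1, c, ab), (-18, 1, c, bc),
     (-27, 1, ab, a), (-9, 1, bc, a), (-18, 1, ac, c), (9, 1, abc, 1), (9, 2, 1, aba),
     (-27, 2, a, ab), (-18, 2, a, bc), (18, 2, b, ba), (-18, 2, ab, b), (9, 2, ba, a),
     (-18, 2, ac, a), (-9, 2, aba, 1), (1, 3, 1, aba), (-1, 3, 1, abc), (-2, 3, a, ab),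
     (-1, 3, a, bc), (1, 3, a, ba), (-1, 3, a, ac), (2, 3, b, ab), (2, 3, b, bc), (-2, 3, c, ba),
     (-2, 3, ab, a), (2, 3, ab, c), (-1, 3, bc, a), (1, 3, ba, a), (-1, 3, ac, a), (2, 3, ac, b),
     (-1, 3, aba, 1), (1, 3, abc, 1), (-2, 4, 1, abc), (-2, 4, a, ab), (-2, 4, a, bc),
     (-2, 4, a, ba), (-2, 4, a, ac), (2, 4, b, ab), (2, 4, b, bc), (4, 4, c, ba), (-2, 4, ab, a),
     (2, 4, ab, c), (2, 4, ba, a), (2, 4, ac, a), (-4, 4, ac, b), (-2, 4, aba, 1), (2, 5, 1, aba),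
     (2, 5, a, bc), (2, 5, a, ba), (-4, 5, b, ab), (-4, 5, b, bc), (-2, 5, c, ba), (-4, 5, ab, c),
     (-2, 5, bc, a), (-2, 5, ac, a), (2, 5, ac, b), (2, 5, abc, 1)],
    [(-9, 0, 1, bac), (18, 0, b, ab), (-9, 0, b, bc), (-18, 0, c, ba), (-18, 0, c, ac),
     (-18, 0, bc, c), (-27, 0, ba, b), (-9, 0, ac, b), (9, 0, bac, 1), (18, 1, 1, abc),
     (-18, 1, a, ba), (-9, 1, a, ac), (9, 1, c, ab), (-9, 1, c, bc), (9, 1, ab, a), (-9, 1, bc, a),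
     (-18, 1, ba, c), (-9, 1, ac, c), (-18, 1, abc, 1), (9, 2, 1, aba), (18, 2, a, ab),
     (-27, 2, b, ba), (-18, 2, b, ac), (9, 2, ab, b), (-18, 2, bc, b), (-18, 2, ba, a),
     (-9, 2, aba, 1), (1, 3, 1, aba), (-1, 3, 1, bac), (2, 3, a, ba), (2, 3, a, ac), (1, 3, b, ab),
     (-1, 3, b, bc), (-2, 3, b, ba), (-1, 3, b, ac), (-2, 3, c, ab), (1, 3, ab, b), (2, 3, bc, a),
     (-1, 3, bc, b), (-2, 3, ba, b), (2, 3, ba, c), (-1, 3, ac, b), (-1, 3, aba, 1), (1, 3, bac, 1),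
     (2, 4, 1, aba), (-4, 4, a, ba), (-4, 4, a, ac), (2, 4, b, ab), (2, 4, b, ac), (-2, 4, c, ab),
     (2, 4, bc, a), (-2, 4, bc, b), (-4, 4, ba, c), (-2, 4, ac, b), (2, 4, bac, 1), (-2, 5, 1, bac),
     (2, 5, a, ba), (2, 5, a, ac), (-2, 5, b, ab), (-2, 5, b, bc), (-2, 5, b, ba), (-2, 5, b, ac),
     (4, 5, c, ab), (2, 5, ab, b), (-4, 5, bc, a), (2, 5, bc, b), (-2, 5, ba, b), (2, 5, ba, c),
     (-2, 5, aba, 1)],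
    [(-9, 0, 1, bac), (18, 0, b, bc), (9, 0, c, ba), (27, 0, c, ac), (18, 0, ab, c), (27, 0, bc, c),
     (18, 0, ba, b), (18, 0, ac, b), (9, 0, bac, 1), (-9, 1, 1, abc), (18, 1, a, ac), (9, 1, c, ab),
     (27, 1, c, bc), (18, 1, ab, a), (18, 1, bc, a), (18, 1, ba, c), (27, 1, ac, c), (9, 1, abc, 1),
     (-18, 2, 1, aba), (9, 2, a, ab), (18, 2, a, bc), (9, 2, b, ba), (18, 2, b, ac), (9, 2, ab, b),
     (18, 2, bc, b), (9, 2, ba, a), (18, 2, ac, a), (18, 2, aba, 1), (-1, 3, 1, abc),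
     (-1, 3, 1, bac), (-2, 3, a, bc), (-2, 3, b, ac), (1, 3, c, ab), (2, 3, c, bc), (1, 3, c, ba),
     (2, 3, c, ac), (-2, 3, ab, b), (1, 3, ab, c), (-2, 3, bc, b), (2, 3, bc, c), (-2, 3, ba, a),
     (1, 3, ba, c), (-2, 3, ac, a), (2, 3, ac, c), (1, 3, abc, 1), (1, 3, bac, 1), (-2, 4, 1, bac),
     (-2, 4, a, bc), (4, 4, b, ac), (2, 4, c, bc), (2, 4, c, ba), (-2, 4, ab, b), (2, 4, ab, c),
     (-2, 4, bc, b), (2, 4, bc, c), (4, 4, ba, a), (-2, 4, ba, c), (4, 4, ac, a), (2, 4, abc, 1),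
     (-2, 5, 1, abc), (4, 5, a, bc), (-2, 5, b, ac), (2, 5, c, ab), (2, 5, c, ac), (4, 5, ab, b),
     (-2, 5, ab, c), (4, 5, bc, b), (-2, 5, ba, a), (2, 5, ba, c), (-2, 5, ac, a), (2, 5, ac, c),
     (2, 5, bac, 1)]]

/-- The component `K₂ → K₅` of the extension of `f₀`. -/
def f₂ : BimoduleTable Word 5 6 :=
  ![[(-18, 0, 1, bac), (-9, 0, b, ba), (9, 0, b, ac), (18, 0, c, ab), (9, 0, c, bc),
     (-18, 0, ab, b), (-9, 0, bc, b), (9, 0, ba, c), (-9, 0, ac, c), (-18, 0, bac, 1)],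
    [(-18, 1, 1, abc), (-9, 1, a, ab), (9, 1, a, bc), (18, 1, c, ba), (9, 1, c, ac), (9, 1, ab, c),
     (-9, 1, bc, c), (-18, 1, ba, a), (-9, 1, ac, a), (-18, 1, abc, 1)],
    [(18, 2, 1, aba), (-9, 2, a, ba), (-18, 2, a, ac), (-9, 2, b, ab), (-18, 2, b, bc),
     (9, 2, ab, a), (18, 2, bc, a), (9, 2, ba, b), (18, 2, ac, b), (18, 2, aba, 1)],
    [(9, 0, 1, aba), (9, 0, 1, abc), (9, 0, 1, bac), (9, 0, a, bc), (9, 0, a, ba), (9, 0, a, ac),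
     (18, 0, b, bc), (-18, 0, b, ba), (-9, 0, b, ac), (-27, 0, c, ab), (-27, 0, c, bc),
     (18, 0, c, ba), (18, 0, c, ac), (27, 0, ab, b), (9, 0, bc, a), (18, 0, bc, c), (9, 0, ba, a),
     (18, 0, ba, b), (-9, 0, ba, c), (9, 0, ac, a), (18, 0, ac, b), (-18, 0, ac, c),
     (-9, 0, aba, 1), (-9, 0, abc, 1), (9, 0, bac, 1), (-9, 1, 1, aba), (9, 1, 1, abc),
     (-9, 1, 1, bac), (27, 1, a, ab), (-18, 1, a, ac), (-9, 1, b, ab), (-9, 1, b, bc),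
     (-9, 1, b, ac), (-18, 1, c, ab), (-18, 1, c, bc), (9, 1, c, ba), (18, 1, c, ac),
     (-18, 1, ab, a), (-9, 1, ab, b), (-18, 1, bc, a), (-9, 1, bc, b), (27, 1, bc, c),
     (-9, 1, ba, a), (9, 1, ac, a), (-9, 1, ac, b), (-18, 1, ac, c), (9, 1, aba, 1), (9, 1, abc, 1),
     (9, 1, bac, 1), (-9, 2, 1, aba), (-9, 2, 1, abc), (9, 2, 1, bac), (18, 2, a, ab),
     (9, 2, a, ba), (-9, 2, a, ac), (27, 2, b, bc), (-18, 2, b, ba), (9, 2, c, ab), (-9, 2, c, ba),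
     (-27, 2, ab, a), (18, 2, ab, b), (9, 2, ab, c), (-27, 2, bc, a), (-18, 2, ba, a),
     (18, 2, ba, b), (-9, 2, ba, c), (9, 2, ac, b), (-9, 2, aba, 1), (9, 2, abc, 1),
     (-9, 2, bac, 1), (-1, 3, 1, aba), (1, 3, 1, abc), (1, 3, 1, bac), (3, 3, a, ab), (1, 3, a, ba),
     (3, 3, b, bc), (-1, 3, b, ba), (-1, 3, b, ac), (-3, 3, c, ab), (-3, 3, c, bc), (1, 3, c, ac),
     (-3, 3, ab, a), (3, 3, ab, b), (-3, 3, bc, a), (3, 3, bc, c), (1, 3, ba, b), (-1, 3, ba, c),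
     (1, 3, ac, a), (-1, 3, ac, c), (-1, 3, aba, 1), (1, 3, abc, 1), (1, 3, bac, 1), (2, 4, 1, abc),
     (-2, 4, 1, bac), (4, 4, a, ab), (2, 4, a, bc), (2, 4, b, ab), (2, 4, b, ac), (2, 4, c, ab),
     (2, 4, c, bc), (-2, 4, c, ba), (-4, 4, ab, a), (-2, 4, ab, b), (-2, 4, ab, c), (-2, 4, bc, a),
     (-2, 4, bc, c), (2, 4, ba, c), (-2, 4, ac, b), (-2, 4, aba, 1), (-2, 4, bac, 1),
     (-2, 5, 1, aba), (-2, 5, 1, bac), (2, 5, a, ab), (2, 5, a, bc), (2, 5, a, ba), (2, 5, a, ac),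
     (2, 5, b, bc), (2, 5, b, ac), (2, 5, c, ab), (4, 5, c, bc), (-2, 5, ab, a), (-2, 5, ab, c),
     (-2, 5, bc, a), (-2, 5, bc, b), (-4, 5, bc, c), (-2, 5, ba, a), (-2, 5, ac, a), (-2, 5, ac, b),
     (-2, 5, aba, 1), (-2, 5, abc, 1)],
    [(-9, 0, 1, aba), (-9, 0, 1, abc), (9, 0, 1, bac), (-9, 0, a, bc), (-9, 0, a, ba),
     (-9, 0, a, ac), (-18, 0, b, bc), (27, 0, b, ba), (9, 0, c, ab), (18, 0, c, bc),
     (-18, 0, c, ba), (-18, 0, c, ac), (-9, 0, ab, b), (-9, 0, bc, a), (9, 0, bc, b),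
     (-18, 0, bc, c), (-9, 0, ba, a), (-18, 0, ba, b), (-9, 0, ac, a), (-18, 0, ac, b),
     (27, 0, ac, c), (9, 0, aba, 1), (9, 0, abc, 1), (9, 0, bac, 1), (9, 1, 1, aba), (9, 1, 1, abc),
     (9, 1, 1, bac), (-18, 1, a, ab), (-9, 1, a, bc), (18, 1, a, ac), (9, 1, b, ab), (9, 1, b, bc),
     (9, 1, b, ac), (18, 1, c, ab), (18, 1, c, bc), (-27, 1, c, ba), (-27, 1, c, ac),
     (18, 1, ab, a), (9, 1, ab, b), (-9, 1, ab, c), (18, 1, bc, a), (9, 1, bc, b), (-18, 1, bc, c),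
     (27, 1, ba, a), (9, 1, ac, b), (18, 1, ac, c), (-9, 1, aba, 1), (9, 1, abc, 1),
     (-9, 1, bac, 1), (-9, 2, 1, aba), (9, 2, 1, abc), (-9, 2, 1, bac), (-18, 2, a, ab),
     (27, 2, a, ac), (9, 2, b, ab), (-9, 2, b, bc), (18, 2, b, ba), (-9, 2, c, ab), (9, 2, c, ba),
     (18, 2, ab, a), (-18, 2, ab, b), (-9, 2, ab, c), (9, 2, bc, a), (18, 2, ba, a),
     (-27, 2, ba, b), (9, 2, ba, c), (-27, 2, ac, b), (-9, 2, aba, 1), (-9, 2, abc, 1),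
     (9, 2, bac, 1), (-1, 3, 1, aba), (1, 3, 1, abc), (1, 3, 1, bac), (-1, 3, a, ab),
     (-1, 3, a, bc), (3, 3, a, ac), (1, 3, b, ab), (3, 3, b, ba), (1, 3, c, bc), (-3, 3, c, ba),
     (-3, 3, c, ac), (1, 3, ab, a), (-1, 3, ab, c), (1, 3, bc, b), (-1, 3, bc, c), (3, 3, ba, a),
     (-3, 3, ba, b), (-3, 3, ac, b), (3, 3, ac, c), (-1, 3, aba, 1), (1, 3, abc, 1), (1, 3, bac, 1),
     (-2, 4, 1, aba), (-2, 4, 1, bac), (-2, 4, a, ba), (2, 4, a, ac), (2, 4, b, ab), (2, 4, b, bc),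
     (-2, 4, b, ba), (2, 4, c, ab), (2, 4, c, ac), (-2, 4, ab, b), (-2, 4, ab, c), (-2, 4, bc, b),
     (2, 4, ba, a), (2, 4, ba, b), (-2, 4, ac, a), (-2, 4, ac, c), (2, 4, abc, 1), (-2, 4, bac, 1),
     (-2, 5, 1, aba), (-2, 5, 1, abc), (2, 5, a, bc), (2, 5, a, ac), (2, 5, b, ab), (2, 5, b, bc),
     (2, 5, b, ba), (2, 5, b, ac), (2, 5, c, ba), (4, 5, c, ac), (-2, 5, ab, b), (-2, 5, bc, a),
     (-2, 5, bc, b), (-2, 5, ba, b), (-2, 5, ba, c), (-2, 5, ac, a), (-2, 5, ac, b), (-4, 5, ac, c),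
     (-2, 5, aba, 1), (-2, 5, bac, 1)]]

/-- The component `K₂ₙ₊₁ → K₂ₙ₊₄` of the extension of `f₀`, for `n ≥ 1`. -/
def fOdd : BimoduleTable Word 6 6 :=
  ![[(18, 0, 1, bac), (-9, 0, b, ab), (-9, 0, b, bc), (9, 0, c, ba), (-9, 0, ab, c), (-9, 0, ac, b),
     (-18, 0, bac, 1)],
    [(18, 1, 1, abc), (-9, 1, a, ba), (-9, 1, a, ac), (9, 1, c, ab), (-9, 1, bc, a), (-9, 1, ba, c),
     (-18, 1, abc, 1)],
    [(-18, 2, 1, aba), (9, 2, a, bc), (9, 2, b, ac), (9, 2, ab, b), (9, 2, bc, b), (9, 2, ba, a),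
     (9, 2, ac, a), (18, 2, aba, 1)],
    [(2, 3, 1, aba), (-2, 3, 1, abc), (-2, 3, 1, bac), (1, 3, a, ab), (1, 3, a, ac), (1, 3, b, bc),
     (1, 3, b, ba), (-1, 3, c, ab), (-1, 3, c, bc), (-1, 3, c, ba), (-1, 3, c, ac), (1, 3, ab, a),
     (-1, 3, ab, b), (1, 3, bc, a), (-1, 3, bc, c), (-1, 3, ba, a), (1, 3, ba, b), (1, 3, ac, b),
     (-1, 3, ac, c), (-2, 3, aba, 1), (2, 3, abc, 1), (2, 3, bac, 1)],
    [(-2, 4, 1, abc), (2, 4, 1, bac), (2, 4, a, bc), (-2, 4, b, ac), (-2, 4, c, ab), (2, 4, c, ba),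
     (-2, 4, ab, b), (-2, 4, ab, c), (-2, 4, bc, b), (2, 4, ba, a), (2, 4, ba, c), (2, 4, ac, a),
     (2, 4, abc, 1), (-2, 4, bac, 1), (-2, 5, 1, abc), (2, 5, 1, bac), (2, 5, a, bc),
     (-2, 5, b, ac), (-2, 5, c, ab), (2, 5, c, ba), (-2, 5, ab, b), (-2, 5, ab, c), (-2, 5, bc, b),
     (2, 5, ba, a), (2, 5, ba, c), (2, 5, ac, a), (2, 5, abc, 1), (-2, 5, bac, 1)],
    [(2, 4, 1, aba), (2, 4, 1, abc), (-2, 4, a, bc), (-2, 4, a, ba), (-2, 4, a, ac), (-2, 4, b, ab),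
     (-2, 4, b, bc), (-2, 4, c, ba), (2, 4, ab, c), (-2, 4, bc, a), (-2, 4, ba, a), (-2, 4, ac, a),
     (-2, 4, ac, b), (-2, 4, aba, 1), (-2, 4, abc, 1), (2, 5, 1, aba), (2, 5, 1, abc),
     (-2, 5, a, bc), (-2, 5, a, ba), (-2, 5, a, ac), (-2, 5, b, ab), (-2, 5, b, bc), (-2, 5, c, ba),
     (2, 5, ab, c), (-2, 5, bc, a), (-2, 5, ba, a), (-2, 5, ac, a), (-2, 5, ac, b), (-2, 5, aba, 1),
     (-2, 5, abc, 1)]]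

/-- The component `K₂ₙ → K₂ₙ₊₃` of the extension of `f₀`, for `n ≥ 2`. -/
def fEven : BimoduleTable Word 6 6 :=
  ![[(-18, 0, 1, bac), (9, 0, b, ac), (9, 0, c, ab), (-9, 0, ab, b), (-9, 0, bc, b), (9, 0, ba, c),
     (-18, 0, bac, 1)],
    [(-18, 1, 1, abc), (9, 1, a, bc), (9, 1, c, ba), (9, 1, ab, c), (-9, 1, ba, a), (-9, 1, ac, a),
     (-18, 1, abc, 1)],
    [(18, 2, 1, aba), (-9, 2, a, ba), (-9, 2, a, ac), (-9, 2, b, ab), (-9, 2, b, bc), (9, 2, bc, a),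
     (9, 2, ac, b), (18, 2, aba, 1)],
    [(-2, 3, 1, aba), (2, 3, 1, abc), (2, 3, 1, bac), (-1, 3, a, ab), (-1, 3, a, bc), (1, 3, a, ba),
     (1, 3, b, ab), (-1, 3, b, ba), (-1, 3, b, ac), (1, 3, c, bc), (1, 3, c, ac), (1, 3, ab, a),
     (-1, 3, ab, c), (1, 3, bc, b), (-1, 3, bc, c), (1, 3, ba, b), (-1, 3, ba, c), (1, 3, ac, a),
     (-1, 3, ac, c), (-2, 3, aba, 1), (2, 3, abc, 1), (2, 3, bac, 1)],
    [(-2, 4, 1, aba), (2, 4, 1, abc), (-4, 4, 1, bac), (2, 4, a, bc), (-2, 4, a, ba),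
     (-2, 4, a, ac), (4, 4, b, ab), (4, 4, b, bc), (2, 4, b, ac), (2, 4, c, ab), (-4, 4, c, ba),
     (-2, 4, ab, b), (-4, 4, ab, c), (2, 4, bc, a), (-2, 4, bc, b), (-2, 4, ba, a), (2, 4, ba, c),
     (-2, 4, ac, a), (-4, 4, ac, b), (-2, 4, aba, 1), (2, 4, abc, 1), (-4, 4, bac, 1),
     (-4, 5, 1, aba), (-2, 5, 1, abc), (-2, 5, 1, bac), (4, 5, a, bc), (2, 5, a, ba), (2, 5, a, ac),
     (2, 5, b, ab), (2, 5, b, bc), (4, 5, b, ac), (-2, 5, c, ab), (-2, 5, c, ba), (-4, 5, ab, b),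
     (-2, 5, ab, c), (-2, 5, bc, a), (-4, 5, bc, b), (-4, 5, ba, a), (-2, 5, ba, c), (-4, 5, ac, a),
     (-2, 5, ac, b), (-4, 5, aba, 1), (-2, 5, abc, 1), (-2, 5, bac, 1)],
    [(-2, 4, 1, aba), (2, 4, 1, abc), (-4, 4, 1, bac), (2, 4, a, bc), (-2, 4, a, ba),
     (-2, 4, a, ac), (4, 4, b, ab), (4, 4, b, bc), (2, 4, b, ac), (2, 4, c, ab), (-4, 4, c, ba),
     (-2, 4, ab, b), (-4, 4, ab, c), (2, 4, bc, a), (-2, 4, bc, b), (-2, 4, ba, a), (2, 4, ba, c),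
     (-2, 4, ac, a), (-4, 4, ac, b), (-2, 4, aba, 1), (2, 4, abc, 1), (-4, 4, bac, 1),
     (-4, 5, 1, aba), (-2, 5, 1, abc), (-2, 5, 1, bac), (4, 5, a, bc), (2, 5, a, ba), (2, 5, a, ac),
     (2, 5, b, ab), (2, 5, b, bc), (4, 5, b, ac), (-2, 5, c, ab), (-2, 5, c, ba), (-4, 5, ab, b),
     (-2, 5, ab, c), (-2, 5, bc, a), (-4, 5, bc, b), (-4, 5, ba, a), (-2, 5, ba, c), (-4, 5, ac, a),
     (-2, 5, ac, b), (-4, 5, aba, 1), (-2, 5, abc, 1), (-2, 5, bac, 1)]]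

/-- The component `K₀ → K₁` of 18 times a contracting homotopy, as right modules, of the part of
`K` in degrees at most two, augmented by the multiplication `K₀ → FK(3)`. -/
def s₀ : RightTable Word 1 3
  | 0, a => [(18, 0, 1, 1)]
  | 0, b => [(18, 1, 1, 1)]
  | 0, c => [(18, 2, 1, 1)]
  | 0, ab => [(18, 0, 1, b), (18, 1, a, 1)]
  | 0, bc => [(18, 1, 1, c), (18, 2, b, 1)]
  | 0, ba => [(18, 0, b, 1), (18, 1, 1, a)]
  | 0, ac => [(18, 0, 1, c), (18, 2, a, 1)]
  | 0, aba => [(18, 0, b, b), (18, 1, 1, ab), (18, 1, ba, 1)]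
  | 0, abc => [(18, 0, 1, bc), (18, 1, a, c), (18, 2, ab, 1)]
  | 0, bac => [(18, 0, b, c), (18, 1, 1, ac), (18, 2, ba, 1)]
  | 0, abac => [(18, 0, 1, bac), (18, 0, ac, b), (-18, 1, abc, 1), (18, 2, a, ab)]
  | _, _ => []

/-- The component `K₁ → K₂` of the homotopy `s₀`. -/
def s₁ : RightTable Word 3 5
  | 0, a => [(18, 0, 1, 1)]
  | 0, c => [(18, 3, 1, 1)]
  | 0, ab => [(-18, 0, 1, c), (18, 1, c, 1), (-18, 4, 1, b), (18, 4, a, 1)]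
  | 0, bc => [(-18, 1, 1, c), (18, 3, b, 1)]
  | 0, ba => [(18, 0, b, 1)]
  | 0, ac => [(-18, 0, 1, b), (18, 3, a, 1)]
  | 0, aba => [(-18, 0, bc, 1), (18, 1, 1, ab), (18, 1, b, c), (18, 3, b, a)]
  | 0, abc => [(-18, 0, 1, ba), (-18, 0, ac, 1), (18, 3, a, a)]
  | 0, bac => [(-18, 0, b, b), (18, 1, c, c), (-18, 2, a, a), (18, 3, ba, 1), (18, 3, ac, 1),
    (-18, 4, 1, bc)]
  | 0, abac => [(-18, 0, 1, bac), (-18, 0, ac, c), (18, 2, ab, b), (18, 3, a, ba), (18, 3, a, ac),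
    (-18, 4, abc, 1)]
  | 1, b => [(18, 1, 1, 1)]
  | 1, c => [(18, 4, 1, 1)]
  | 1, ab => [(18, 1, a, 1)]
  | 1, bc => [(-18, 1, 1, a), (18, 4, b, 1)]
  | 1, ac => [(-18, 1, c, 1), (18, 4, 1, b)]
  | 1, aba => [(18, 1, ba, 1)]
  | 1, abc => [(18, 3, a, b)]
  | 1, bac => [(-18, 1, 1, ab), (-18, 1, bc, 1), (18, 4, b, b)]
  | 1, abac => [(-18, 1, abc, 1)]
  | 2, c => [(18, 2, 1, 1)]
  | 2, bc => [(18, 2, b, 1)]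
  | 2, ac => [(18, 2, a, 1)]
  | 2, aba => [(-18, 1, c, c), (18, 2, a, a), (-18, 3, ac, 1), (18, 4, 1, bc)]
  | 2, abc => [(18, 2, ab, 1)]
  | 2, bac => [(18, 2, ba, 1)]
  | 2, abac => [(-18, 2, a, ac), (18, 2, aba, 1), (18, 3, ac, c)]
  | _, _ => []

/-- The component `K₂ → K₃` of the homotopy `s₀`. -/
def s₂ : RightTable Word 5 6
  | 0, a => [(18, 0, 1, 1)]
  | 0, c => [(-18, 2, 1, 1), (6, 3, 1, 1), (-6, 4, 1, 1), (-12, 5, 1, 1)]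
  | 0, ab => [(-18, 0, c, 1), (-18, 1, 1, c), (18, 2, 1, a), (-6, 3, 1, a), (6, 4, 1, a),
    (12, 5, 1, a)]
  | 0, bc => [(18, 1, 1, c)]
  | 0, ba => [(18, 0, b, 1)]
  | 0, aba => [(-18, 0, bc, 1), (18, 1, 1, ab), (18, 1, 1, bc)]
  | 0, abc => [(-18, 0, ac, 1)]
  | 0, bac => [(18, 0, b, c), (18, 0, c, b), (-18, 1, 1, ac), (-18, 1, a, b), (18, 1, b, a),
    (-18, 1, c, c), (18, 1, bc, 1), (-18, 2, 1, ab), (18, 2, a, c), (-18, 2, b, b), (-18, 2, ba, 1),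
    (6, 3, 1, ab), (-6, 3, a, a), (-6, 3, a, c), (6, 3, b, b), (-6, 3, ab, 1), (6, 3, ba, 1),
    (-6, 4, 1, ba), (-6, 4, 1, ac), (-12, 4, c, b), (-6, 4, ba, 1), (-6, 4, ac, 1), (6, 5, 1, ba),
    (6, 5, 1, ac), (-6, 5, c, b), (-12, 5, ba, 1), (-12, 5, ac, 1)]
  | 0, abac => [(18, 0, 1, bac), (18, 0, ab, c), (18, 0, ac, b), (-18, 1, a, ac), (-18, 1, ac, c),
    (18, 1, abc, 1), (18, 2, a, bc), (-18, 2, ab, b), (-18, 2, aba, 1), (6, 3, a, ac),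
    (-6, 3, ac, a),
    (-6, 3, ac, b), (6, 3, aba, 1), (6, 4, a, bc), (-12, 4, ab, c), (6, 4, abc, 1), (12, 5, a, bc),
    (-6, 5, ab, c), (-6, 5, abc, 1)]
  | 1, b => [(18, 1, 1, 1)]
  | 1, ab => [(18, 1, a, 1)]
  | 1, ac => [(-18, 1, c, 1)]
  | 1, aba => [(18, 1, ba, 1)]
  | 1, bac => [(-18, 1, bc, 1)]
  | 1, abac => [(-18, 1, abc, 1)]
  | 2, c => [(18, 2, 1, 1)]
  | 2, bc => [(18, 2, b, 1)]
  | 2, ac => [(18, 2, a, 1)]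
  | 2, abc => [(18, 2, ab, 1)]
  | 2, bac => [(18, 2, ba, 1)]
  | 2, abac => [(18, 2, aba, 1)]
  | 3, c => [(-18, 0, 1, 1), (6, 3, 1, 1), (12, 4, 1, 1), (6, 5, 1, 1)]
  | 3, ab => [(18, 0, 1, c), (18, 1, c, 1), (-18, 2, a, 1), (6, 3, a, 1), (-6, 4, a, 1),
    (-12, 5, a, 1)]
  | 3, bc => [(-18, 0, b, 1), (18, 1, 1, a), (6, 3, b, 1), (12, 4, b, 1), (6, 5, b, 1)]
  | 3, aba => [(-18, 0, c, b), (18, 1, 1, ac), (18, 1, a, b), (-18, 1, b, a), (18, 1, c, c),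
    (18, 2, 1, ab), (-18, 2, a, c), (-6, 3, 1, ab), (-6, 3, a, b), (-6, 3, ac, 1), (6, 4, 1, ab),
    (6, 4, a, b), (6, 4, ac, 1), (12, 5, 1, ab), (-6, 5, a, b), (12, 5, ac, 1)]
  | 3, abc => [(-18, 0, 1, ba), (-18, 0, ab, 1), (18, 1, a, a), (18, 1, ac, 1), (-18, 2, a, b),
    (-6, 3, a, a), (-6, 3, ac, 1), (6, 4, a, a), (6, 4, ac, 1), (-6, 5, a, a), (-6, 5, ac, 1)]
  | 3, bac => [(18, 0, 1, bc), (18, 0, c, c), (-18, 0, ba, 1), (-18, 0, ac, 1), (-18, 1, a, c),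
    (-18, 1, c, a), (-18, 2, 1, ac), (18, 2, a, a), (-18, 2, b, c), (18, 2, ab, 1), (6, 3, 1, ac),
    (6, 3, a, c), (6, 3, b, c), (6, 3, ba, 1), (6, 3, ac, 1), (-6, 4, 1, ac), (6, 4, a, a),
    (-12, 4, a, c), (-6, 4, b, c), (-6, 4, ab, 1), (12, 4, ba, 1), (12, 4, ac, 1), (-12, 5, 1, ac),
    (6, 5, a, b), (-12, 5, b, c), (6, 5, ba, 1)]
  | 3, abac => [(18, 0, ac, c), (-18, 0, aba, 1), (-18, 1, ac, a), (18, 2, a, ba), (18, 2, abc, 1),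
    (6, 3, ac, a), (-6, 3, abc, 1), (-6, 4, ac, a), (6, 4, abc, 1), (6, 5, ac, a), (12, 5, abc, 1)]
  | 4, c => [(-18, 1, 1, 1), (6, 3, 1, 1), (-6, 4, 1, 1), (6, 5, 1, 1)]
  | 4, ab => [(18, 0, 1, a), (6, 3, a, 1), (12, 4, a, 1), (6, 5, a, 1)]
  | 4, bc => [(18, 1, 1, b), (6, 3, b, 1), (-6, 4, b, 1), (6, 5, b, 1)]
  | 4, ba => [(-18, 2, b, 1), (6, 3, b, 1), (-6, 4, b, 1), (-12, 5, b, 1)]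
  | 4, ac => [(18, 0, 1, b), (18, 0, c, 1), (18, 1, 1, c), (-18, 1, a, 1), (-18, 2, 1, a),
    (6, 3, 1, a),
    (6, 3, a, 1), (-6, 4, 1, a), (-6, 4, a, 1), (-12, 5, 1, a), (6, 5, a, 1)]
  | 4, aba => [(-18, 0, 1, bc), (-18, 0, c, c), (18, 0, ac, 1), (18, 1, a, c), (18, 1, c, a),
    (18, 2, 1, ac), (-18, 2, a, a), (-18, 2, ab, 1), (-6, 3, 1, ac), (-6, 3, a, c), (-6, 3, ac, 1),
    (6, 4, 1, ac), (6, 4, a, c), (-12, 4, ac, 1), (12, 5, 1, ac), (-6, 5, a, c), (-6, 5, ac, 1)]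
  | 4, bac => [(18, 0, b, b), (18, 0, bc, 1), (-18, 1, 1, ab), (-18, 1, 1, bc), (-18, 1, ba, 1),
    (-18, 2, b, a), (6, 3, b, a), (6, 3, ba, 1), (-6, 4, b, a), (-6, 4, ba, 1), (-12, 5, b, a),
    (6, 5, ba, 1)]
  | 4, abac => [(18, 0, 1, aba), (18, 0, ab, b), (18, 0, abc, 1), (-18, 1, a, ab), (-18, 1, aba, 1),
    (-18, 2, ab, a), (6, 3, a, ab), (-6, 3, ac, a), (-6, 3, ac, c), (6, 3, aba, 1), (-6, 4, a, ab),
    (-12, 4, ac, b), (6, 4, ac, c), (-6, 4, aba, 1), (-12, 4, abc, 1), (6, 5, a, ab), (6, 5, ac, a),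
    (-6, 5, aba, 1)]
  | _, _ => []

/-- The component `K₃ → K₄` of the homotopy `s₀`, which contracts `K₃` up to the image of `f₀`. -/
def s₃ : RightTable Word 6 6
  | 0, a => [(18, 0, 1, 1)]
  | 0, ab => [(-18, 0, c, 1)]
  | 0, ba => [(18, 0, b, 1)]
  | 0, aba => [(-18, 0, bc, 1)]
  | 0, abc => [(-18, 0, ac, 1)]
  | 0, bac => [(9, 0, 1, bc), (-9, 0, 1, ba), (-9, 0, a, c), (-9, 0, b, a), (9, 0, b, c),
    (9, 0, c, b), (9, 0, bc, 1), (-9, 0, ac, 1), (-9, 1, 1, ab), (9, 1, 1, ac), (-9, 1, a, b),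
    (9, 1, a, c), (-9, 1, b, c), (9, 1, c, a), (18, 1, c, c), (-9, 1, bc, 1), (9, 1, ac, 1),
    (9, 2, 1, ab), (9, 2, 1, ba), (18, 2, a, a), (9, 2, a, b), (9, 2, b, a), (18, 2, b, b),
    (9, 2, ab, 1), (9, 2, ba, 1), (2, 3, 1, ab), (2, 3, 1, ba), (-3, 3, a, a), (-2, 3, a, b),
    (2, 3, a, c), (2, 3, b, a), (1, 3, b, b), (3, 3, c, c), (2, 3, ba, 1), (-2, 3, ac, 1),
    (-4, 4, 1, ba), (2, 4, 1, ac), (2, 4, a, c), (-4, 4, c, a), (2, 4, c, b), (2, 4, ba, 1),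
    (4, 4, ac, 1), (-2, 5, 1, bc), (2, 5, 1, ba), (-4, 5, a, a), (4, 5, a, b), (-6, 5, a, c),
    (2, 5, b, a), (-2, 5, b, b), (4, 5, b, c), (4, 5, c, a), (-2, 5, c, c), (-4, 5, ab, 1),
    (-2, 5, bc, 1)]
  | 0, abac => [(9, 0, a, bc), (-9, 0, a, ba), (-9, 0, b, bc), (9, 0, c, ba), (-9, 0, ba, b),
    (-9, 0, aba, 1), (9, 0, abc, 1), (-18, 0, bac, 1), (-9, 1, 1, abc), (-9, 1, a, ab),
    (-9, 1, a, bc), (-9, 1, a, ba), (-18, 1, c, ab), (-18, 1, c, bc), (-9, 1, bc, a), (9, 1, ac, a),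
    (9, 2, 1, aba), (9, 2, a, ba), (18, 2, b, ba), (9, 2, ab, a), (9, 2, ba, a), (-2, 3, 1, abc),
    (-2, 3, a, ba), (3, 3, b, ba), (-1, 3, c, ab), (-1, 3, c, bc), (-2, 3, bc, a), (-2, 3, ac, a),
    (-2, 4, 1, abc), (4, 4, a, ba), (-2, 4, b, ba), (2, 4, c, ab), (2, 4, c, bc), (4, 4, c, ba),
    (2, 4, ba, a), (2, 5, 1, aba), (2, 5, a, ab), (2, 5, a, bc), (2, 5, a, ba), (-2, 5, b, ab),
    (-2, 5, b, bc), (-8, 5, ab, a), (-2, 5, bc, a), (4, 5, ac, a)]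
  | 1, b => [(18, 1, 1, 1)]
  | 1, ab => [(18, 1, a, 1)]
  | 1, ac => [(-18, 1, c, 1)]
  | 1, aba => [(18, 1, ba, 1)]
  | 1, bac => [(-18, 1, bc, 1)]
  | 1, abac => [(-18, 1, abc, 1)]
  | 2, c => [(18, 2, 1, 1)]
  | 2, bc => [(18, 2, b, 1)]
  | 2, ac => [(18, 2, a, 1)]
  | 2, abc => [(18, 2, ab, 1)]
  | 2, bac => [(18, 2, ba, 1)]
  | 2, abac => [(18, 2, aba, 1)]
  | 3, c => [(18, 3, 1, 1)]
  | 3, ab => [(-18, 0, c, 1), (18, 1, 1, a), (18, 1, c, 1), (18, 3, a, 1)]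
  | 3, bc => [(-18, 0, b, 1), (-6, 3, a, 1), (18, 3, b, 1), (-12, 4, 1, b), (6, 5, 1, b),
    (-6, 5, a, 1)]
  | 3, ba => [(18, 0, b, 1), (6, 3, a, 1), (12, 4, 1, b), (-6, 5, 1, b), (6, 5, a, 1)]
  | 3, ac => [(18, 0, c, 1), (-18, 1, 1, a), (-18, 1, c, 1)]
  | 3, aba => [(18, 0, c, b), (18, 0, c, c), (-18, 0, bc, 1), (18, 0, ac, 1), (-18, 1, 1, ab),
    (-18, 1, 1, ac), (-18, 1, c, a), (-18, 1, c, c), (18, 1, ba, 1), (-18, 2, ab, 1),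
    (-6, 3, ac, 1), (-6, 4, a, c), (6, 4, ac, 1), (12, 5, a, c), (-6, 5, ac, 1)]
  | 3, abc => [(-18, 0, ab, 1), (-18, 0, ac, 1), (18, 1, ac, 1), (18, 2, ab, 1), (-12, 3, ac, 1),
    (6, 4, a, c), (-6, 4, ac, 1), (-12, 5, a, c), (6, 5, ac, 1)]
  | 3, bac => [(-18, 0, b, a), (-18, 0, b, b), (-18, 0, b, c), (-18, 0, c, b), (-18, 0, c, c),
    (18, 0, bc, 1), (-18, 0, ac, 1), (18, 1, 1, ab), (18, 1, 1, ac), (18, 1, c, a), (18, 1, c, c),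
    (-18, 1, ba, 1), (18, 2, ab, 1), (-6, 3, ab, 1), (18, 3, ba, 1), (-12, 4, 1, bc),
    (-12, 4, 1, ba), (6, 4, a, c), (-6, 4, ac, 1), (6, 5, 1, bc), (6, 5, 1, ba), (-6, 5, a, a),
    (-6, 5, a, b), (-18, 5, a, c), (6, 5, ac, 1)]
  | 3, abac => [(-18, 0, ab, b), (-18, 0, ab, c), (-18, 0, ac, b), (-18, 0, ac, c),
    (-18, 0, aba, 1), (18, 0, abc, 1), (18, 1, ac, a), (18, 1, ac, b), (18, 1, ac, c),
    (18, 2, ab, a), (18, 2, ab, b), (18, 2, abc, 1), (12, 3, aba, 1), (-6, 3, abc, 1),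
    (-6, 4, a, ab), (-6, 4, a, bc), (-6, 4, ac, a), (-12, 4, ac, b), (-6, 4, ac, c), (6, 5, a, ab),
    (12, 5, a, bc), (6, 5, a, ba), (6, 5, a, ac), (-6, 5, ab, b), (6, 5, ac, a), (12, 5, ac, b),
    (6, 5, ac, c)]
  | 4, c => [(18, 4, 1, 1), (-18, 5, 1, 1)]
  | 4, ab => [(-18, 0, c, 1), (-18, 1, 1, a), (18, 1, c, 1), (18, 5, a, 1)]
  | 4, bc => [(6, 3, a, 1), (12, 4, 1, b), (18, 4, b, 1), (-6, 5, 1, b), (-18, 5, b, 1)]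
  | 4, ba => [(18, 0, b, 1), (6, 5, a, 1)]
  | 4, ac => [(-18, 0, c, 1), (18, 1, c, 1)]
  | 4, aba => [(-18, 0, c, b), (-18, 0, bc, 1), (-18, 0, ac, 1), (-18, 1, 1, ab), (18, 1, 1, ac),
    (-18, 1, c, a), (-18, 1, ba, 1), (-18, 2, ab, 1), (-6, 3, ac, 1), (-6, 4, ac, 1),
    (-12, 5, ac, 1)]
  | 4, abc => [(-18, 0, ac, 1), (18, 1, ac, 1), (-6, 4, a, b), (6, 5, a, a), (6, 5, a, c),
    (6, 5, ab, 1)]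
  | 4, bac => [(-18, 0, b, b), (18, 0, b, c), (-18, 0, c, c), (-18, 0, bc, 1), (-18, 1, 1, ab),
    (-18, 1, c, a), (18, 1, c, c), (-18, 2, ab, 1), (-6, 3, a, a), (6, 3, a, b), (-6, 3, ac, 1),
    (-12, 4, 1, ba), (6, 4, a, b), (18, 4, ba, 1), (12, 4, ac, 1), (6, 5, 1, ba), (-6, 5, a, a),
    (-6, 5, a, b), (-6, 5, ab, 1), (-18, 5, ba, 1), (-12, 5, ac, 1)]
  | 4, abac => [(-18, 0, ab, b), (18, 0, ab, c), (-18, 0, ac, c), (-18, 0, abc, 1), (-18, 1, ac, a),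
    (18, 1, ac, c), (18, 2, ab, b), (-18, 2, abc, 1), (6, 3, ac, b), (-6, 3, ac, c), (12, 4, a, ba),
    (6, 4, ab, c), (-6, 4, ac, c), (6, 5, a, ab), (-12, 5, a, ba), (-6, 5, a, ac), (-6, 5, ab, a),
    (-18, 5, abc, 1)]
  | 5, c => [(18, 5, 1, 1)]
  | 5, ab => [(18, 1, 1, a), (-18, 4, a, 1)]
  | 5, bc => [(18, 0, b, 1), (-6, 3, a, 1), (-12, 4, 1, b), (6, 5, 1, b), (6, 5, a, 1),
    (18, 5, b, 1)]
  | 5, ba => [(-6, 3, a, 1), (-12, 4, 1, b), (6, 5, 1, b)]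
  | 5, ac => [(18, 0, c, 1), (18, 1, 1, a), (-18, 1, c, 1)]
  | 5, aba => [(18, 0, c, b), (-18, 0, c, c), (18, 0, ac, 1), (-18, 1, 1, ac), (18, 1, c, c),
    (18, 1, ba, 1), (6, 4, a, b), (18, 4, ac, 1), (-6, 5, a, a), (-6, 5, a, c), (-6, 5, ab, 1)]
  | 5, abc => [(18, 0, ab, 1), (-18, 2, ab, 1), (-6, 3, ac, 1), (6, 4, a, c), (-12, 5, a, c)]
  | 5, bac => [(18, 0, b, a), (-18, 0, b, c), (18, 0, c, b), (18, 0, bc, 1), (18, 0, ac, 1),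
    (18, 1, 1, ab), (-18, 1, 1, ac), (18, 1, c, a), (18, 1, ba, 1), (18, 2, ab, 1), (-6, 3, a, b),
    (6, 3, a, c), (6, 3, ac, 1), (12, 4, 1, bc), (6, 4, ac, 1), (-6, 5, 1, bc), (6, 5, a, a),
    (-6, 5, a, c), (18, 5, ba, 1), (12, 5, ac, 1)]
  | 5, abac => [(-18, 0, ab, c), (18, 0, ac, b), (18, 0, aba, 1), (18, 0, abc, 1), (18, 1, ac, a),
    (-18, 1, ac, b), (-18, 2, ab, a), (18, 2, abc, 1), (-6, 3, ac, a), (6, 3, ac, c),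
    (-6, 4, ac, a), (18, 4, abc, 1), (-6, 5, a, ab), (6, 5, a, ba), (6, 5, a, ac), (-6, 5, ab, b),
    (6, 5, ac, a)]
  | _, _ => []

/-- A contracting homotopy `K₂ₙ → K₂ₙ₊₁` for `n ≥ 2`, not multiplied by 18. -/
def sEven : RightTable Word 6 6
  | 0, a => [(1, 0, 1, 1)]
  | 0, bc => [(-1, 0, c, 1)]
  | 0, ba => [(1, 0, b, 1)]
  | 0, aba => [(1, 0, ab, 1)]
  | 0, abc => [(-1, 0, ac, 1)]
  | 0, abac => [(-1, 0, bac, 1)]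
  | 1, b => [(1, 1, 1, 1)]
  | 1, ab => [(1, 1, a, 1)]
  | 1, ba => [(-1, 1, c, 1)]
  | 1, aba => [(-1, 1, ac, 1)]
  | 1, bac => [(-1, 1, bc, 1)]
  | 1, abac => [(-1, 1, abc, 1)]
  | 2, c => [(1, 2, 1, 1)]
  | 2, bc => [(1, 2, b, 1)]
  | 2, ac => [(1, 2, a, 1)]
  | 2, abc => [(1, 2, ab, 1)]
  | 2, bac => [(1, 2, ba, 1)]
  | 2, abac => [(1, 2, aba, 1)]
  | 3, c => [(1, 3, 1, 1)]
  | 3, ba => [(1, 3, b, 1)]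
  | 3, ac => [(1, 3, a, 1)]
  | 3, abc => [(1, 3, ab, 1)]
  | 3, bac => [(-1, 3, bc, 1)]
  | 3, abac => [(1, 3, aba, 1)]
  | 4, c => [(1, 4, 1, 1), (1, 5, 1, 1)]
  | 4, ab => [(-1, 5, a, 1)]
  | 4, ba => [(-1, 4, b, 1)]
  | 4, abc => [(1, 4, ac, 1)]
  | 4, bac => [(1, 5, bc, 1)]
  | 4, abac => [(1, 4, aba, 1), (1, 5, aba, 1)]
  | 5, c => [(1, 5, 1, 1)]
  | 5, ab => [(1, 4, a, 1)]
  | 5, ba => [(-1, 4, b, 1), (-1, 5, b, 1)]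
  | 5, abc => [(1, 4, ac, 1), (1, 5, ac, 1)]
  | 5, bac => [(-1, 4, bc, 1)]
  | 5, abac => [(1, 5, aba, 1)]
  | _, _ => []

/-- A contracting homotopy `K₂ₙ₋₁ → K₂ₙ` for `n ≥ 2`, not multiplied by 18. -/
def sOdd : RightTable Word 6 6
  | 0, a => [(1, 0, 1, 1)]
  | 0, bc => [(-1, 0, c, 1)]
  | 0, ba => [(1, 0, b, 1)]
  | 0, aba => [(1, 0, ab, 1)]
  | 0, abc => [(-1, 0, ac, 1)]
  | 0, abac => [(-1, 0, bac, 1)]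
  | 1, b => [(1, 1, 1, 1)]
  | 1, ab => [(1, 1, a, 1)]
  | 1, ba => [(-1, 1, c, 1)]
  | 1, aba => [(-1, 1, ac, 1)]
  | 1, bac => [(-1, 1, bc, 1)]
  | 1, abac => [(-1, 1, abc, 1)]
  | 2, c => [(1, 2, 1, 1)]
  | 2, bc => [(1, 2, b, 1)]
  | 2, ac => [(1, 2, a, 1)]
  | 2, abc => [(1, 2, ab, 1)]
  | 2, bac => [(1, 2, ba, 1)]
  | 2, abac => [(1, 2, aba, 1)]
  | 3, c => [(1, 3, 1, 1)]
  | 3, ba => [(1, 3, b, 1)]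
  | 3, ac => [(1, 3, a, 1)]
  | 3, abc => [(1, 3, ab, 1)]
  | 3, bac => [(-1, 3, bc, 1)]
  | 3, abac => [(1, 3, aba, 1)]
  | 4, c => [(1, 4, 1, 1), (-1, 5, 1, 1)]
  | 4, ab => [(1, 5, a, 1)]
  | 4, ba => [(-1, 4, b, 1)]
  | 4, abc => [(1, 4, ac, 1)]
  | 4, bac => [(-1, 5, bc, 1)]
  | 4, abac => [(1, 4, aba, 1), (-1, 5, aba, 1)]
  | 5, c => [(1, 5, 1, 1)]
  | 5, ab => [(-1, 4, a, 1)]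
  | 5, ba => [(1, 4, b, 1), (-1, 5, b, 1)]
  | 5, abc => [(-1, 4, ac, 1), (1, 5, ac, 1)]
  | 5, bac => [(1, 4, bc, 1)]
  | 5, abac => [(1, 5, aba, 1)]
  | _, _ => []

/-- A homomorphism of right modules `K₃ → K₀`, on homology 18 times a retraction of `f₀`. -/
def τ : RightTable Word 6 1
  | 0, bac => [(-1, 0, 1, 1)]
  | 0, abac => [(-1, 0, 1, a)]
  | _, _ => []

/-- The cocycles in degree zero of the Koszul complex with coefficients in `FK(3)`. -/
def cocycles₀ : CocycleTable Word 3 1 4 where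
  scalar := 2
  cocycle :=
    ![((0, 1), [(1, 0, 1)]), ((0, ba), [(1, 0, ab), (1, 0, ba)]),
      ((0, ac), [(-1, 0, ab), (-1, 0, bc), (1, 0, ac)]), ((0, abac), [(1, 0, abac)])]
  inverse
    | (0, ba) => [(-2, 0, b)]
    | (0, ac) => [(2, 0, c)]
    | (0, abc) => [(2, 0, bc)]
    | (0, abac) => [(1, 0, bac)]
    | (1, ab) => [(-2, 0, a)]
    | (1, aba) => [(2, 0, ab)]
    | (1, abac) => [(1, 0, abc)]
    | (2, abac) => [(-1, 0, aba)]
    | _ => []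

/-- The cocycles in degree one. -/
def cocycles₁ : CocycleTable Word 5 3 15 where
  scalar := 2
  cocycle :=
    ![((0, abc), [(-1, 0, aba), (1, 0, abc)]), ((0, bac), [(1, 0, bac)]),
      ((0, abac), [(1, 0, abac)]), ((1, b), [(1, 0, a), (1, 1, b), (1, 2, c)]),
      ((1, ba), [(1, 0, ab), (1, 0, bc), (1, 0, ac), (1, 1, bc), (1, 1, ba), (1, 1, ac)]),
      ((1, aba), [(1, 0, aba), (1, 1, aba)]), ((1, abc), [(1, 1, abc)]),
      ((1, bac), [(1, 0, aba), (1, 1, bac)]), ((1, abac), [(1, 1, abac)]),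
      ((2, bc), [(1, 0, ab), (1, 0, bc), (1, 0, ac), (1, 1, ab), (1, 1, bc), (1, 1, ac), (1, 2, ab),
        (1, 2, bc), (1, 2, ac)]),
      ((2, ba), [(-2, 0, ab), (-1, 0, bc), (1, 0, ba), (-1, 0, ac), (-1, 1, ab), (-1, 1, bc),
        (-1, 1, ac), (-1, 2, ab), (1, 2, ba)]),
      ((2, aba), [(1, 2, aba)]), ((2, abc), [(1, 0, aba), (1, 2, abc)]),
      ((2, bac), [(-1, 0, aba), (1, 2, bac)]), ((2, abac), [(1, 2, abac)])]
  inverse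
    | (0, ba) => [(2, 0, b)]
    | (0, ac) => [(2, 0, c)]
    | (0, aba) => [(2, 0, ab)]
    | (0, abc) => [(2, 0, ab), (2, 0, bc)]
    | (1, ab) => [(2, 1, a)]
    | (1, bc) => [(2, 1, c)]
    | (1, aba) => [(-1, 0, bc), (-1, 0, ba), (-1, 0, ac), (1, 1, ab), (-1, 1, bc), (-1, 1, ac)]
    | (1, bac) => [(-1, 0, bc), (-1, 0, ba), (-1, 0, ac), (1, 1, ab), (-1, 1, bc), (1, 1, ac)]
    | (2, c) => [(-1, 0, 1), (-1, 1, 1), (1, 2, 1)]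
    | (2, ab) => [(-2, 2, a)]
    | (2, ba) => [(-2, 2, b)]
    | (2, abc) => [(-1, 1, ab), (-1, 1, bc), (-1, 1, ac), (-2, 2, ac)]
    | (2, bac) => [(4, 0, ab), (2, 0, bc), (-2, 0, ba), (2, 0, ac), (3, 1, ab), (3, 1, bc),
      (3, 1, ac), (2, 2, ab), (2, 2, ac)]
    | (3, a) => [(2, 1, 1)]
    | (3, b) => [(2, 0, 1)]
    | (3, bc) => [(-2, 0, a), (-2, 2, c)]
    | (3, aba) => [(-2, 0, ab), (-1, 0, bc), (1, 0, ba), (-1, 0, ac), (-1, 1, ab), (-1, 1, bc),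
      (-1, 1, ac)]
    | (3, abc) => [(1, 1, ab), (1, 1, bc), (1, 1, ac)]
    | (3, abac) => [(-2, 0, aba)]
    | (4, ba) => [(-2, 2, c)]
    | (4, bac) => [(1, 0, bc), (1, 0, ba), (1, 0, ac)]
    | _ => []

/-- The cocycles in degree two. -/
def cocycles₂ : CocycleTable Word 6 5 31 where
  scalar := 6
  cocycle :=
    ![((0, 1), [(1, 0, 1)]), ((0, ba), [(1, 0, ab), (1, 0, ba)]),
      ((0, ac), [(-1, 0, ab), (-1, 0, bc), (1, 0, ac)]),
      ((0, abc), [(1, 0, aba), (1, 0, abc), (2, 3, aba), (2, 3, abc)]), ((0, abac), [(1, 0, abac)]),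
      ((1, 1), [(1, 1, 1)]), ((1, ba), [(1, 1, ab), (1, 1, ba)]),
      ((1, ac), [(-1, 1, ab), (-1, 1, bc), (1, 1, ac)]), ((1, aba), [(-1, 0, aba), (1, 1, aba)]),
      ((1, bac), [(-1, 0, aba), (1, 1, bac), (-2, 3, abc)]), ((1, abac), [(1, 1, abac)]),
      ((2, 1), [(1, 2, 1)]), ((2, ba), [(1, 2, ab), (1, 2, ba)]),
      ((2, ac), [(-1, 2, ab), (-1, 2, bc), (1, 2, ac)]),
      ((2, abc), [(1, 0, aba), (1, 2, abc), (2, 3, aba), (2, 3, abc)]),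
      ((2, bac), [(-1, 0, aba), (1, 2, bac), (-2, 3, abc)]), ((2, abac), [(1, 2, abac)]),
      ((3, bc), [(1, 3, ab), (1, 3, bc), (-1, 4, ac)]),
      ((3, bac), [(1, 0, aba), (1, 3, aba), (1, 3, abc), (1, 3, bac)]), ((3, abac), [(1, 3, abac)]),
      ((4, 1), [(1, 3, 1), (1, 4, 1)]),
      ((4, a), [(-1, 0, a), (1, 1, b), (1, 2, c), (1, 3, a), (1, 4, a)]),
      ((4, b), [(1, 0, a), (-1, 1, b), (1, 2, c), (1, 3, b), (1, 4, b)]),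
      ((4, c), [(1, 0, a), (1, 1, b), (-1, 2, c), (1, 3, c), (1, 4, c)]),
      ((4, ab), [(1, 3, ba), (1, 4, ab)]), ((4, bc), [(-1, 3, ba), (-1, 3, ac), (1, 4, bc)]),
      ((4, ba), [(1, 3, ab), (1, 4, ba)]), ((4, aba), [(-1, 3, aba), (1, 4, aba)]),
      ((4, abc), [(-1, 3, abc), (1, 4, abc)]),
      ((4, bac), [(1, 0, aba), (1, 3, aba), (1, 3, abc), (1, 4, bac)]), ((4, abac), [(1, 4, abac)])]
  inverse
    | (0, ba) => [(-6, 0, b), (6, 1, b)]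
    | (0, ac) => [(6, 0, c), (-6, 2, c)]
    | (0, aba) => [(-6, 0, ab), (6, 3, ab), (-12, 3, ac), (12, 4, ac)]
    | (0, abc) => [(6, 0, ab), (6, 0, bc), (6, 3, ac), (-12, 4, ac)]
    | (0, abac) => [(-3, 0, aba), (3, 0, bac), (-6, 3, abc)]
    | (1, ab) => [(6, 0, a), (-6, 1, a)]
    | (1, bc) => [(6, 1, c), (-6, 2, c)]
    | (1, aba) => [(6, 1, ab), (-6, 3, ab), (12, 3, ac), (-12, 4, ac)]
    | (1, bac) => [(6, 1, bc), (6, 3, ab), (-6, 3, ac)]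
    | (1, abac) => [(3, 0, aba), (3, 1, abc), (6, 3, aba), (6, 3, abc)]
    | (2, ab) => [(6, 0, a), (-6, 2, a)]
    | (2, ba) => [(6, 1, b), (-6, 2, b)]
    | (2, abc) => [(-6, 2, ab), (-6, 2, bc), (-6, 3, ac), (12, 4, ac)]
    | (2, bac) => [(-6, 2, bc), (-6, 3, ab), (6, 3, ac)]
    | (2, abac) => [(3, 0, aba), (-3, 2, aba)]
    | (3, bc) => [(-2, 0, a), (2, 2, c)]
    | (3, ba) => [(2, 0, a), (-2, 1, b)]
    | (3, aba) => [(6, 4, ac)]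
    | (3, abc) => [(-4, 3, ab), (2, 3, ba), (4, 3, ac), (-4, 4, ac)]
    | (3, abac) => [(-1, 0, aba), (-2, 3, aba)]
    | (4, a) => [(-6, 3, 1)]
    | (4, bc) => [(4, 0, a), (-2, 1, b), (-2, 2, c), (-6, 3, a)]
    | (4, ba) => [(-2, 0, a), (-2, 1, b), (-2, 2, c), (-2, 3, a), (-2, 3, b), (-2, 3, c)]
    | (4, aba) => [(-2, 3, ab), (-2, 3, ba), (2, 3, ac), (-2, 4, ac)]
    | (4, abac) => [(4, 0, aba), (2, 3, aba), (6, 3, abc)]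
    | (5, ab) => [(-4, 0, a), (-4, 1, b), (2, 2, c), (2, 3, a), (2, 3, b), (-4, 3, c)]
    | (5, bc) => [(-2, 3, a), (-2, 3, b), (-2, 3, c)]
    | (5, abc) => [(-2, 3, ab), (-2, 3, ba), (-4, 3, ac), (4, 4, ac)]
    | (5, abac) => [(2, 0, aba), (-2, 3, aba)]
    | _ => []

/-- The cocycles in an odd degree at least three. -/
def cocyclesOdd : CocycleTable Word 6 6 41 where
  scalar := 6
  cocycle :=
    ![((0, a), [(1, 0, a)]), ((0, ba), [(-1, 0, ab), (1, 0, ba)]),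
      ((0, ac), [(1, 0, ab), (1, 0, bc), (1, 0, ac)]), ((0, aba), [(1, 0, aba)]),
      ((0, abc), [(1, 0, abc)]), ((0, bac), [(1, 0, bac)]), ((0, abac), [(1, 0, abac)]),
      ((1, b), [(1, 1, b)]), ((1, ba), [(-1, 1, ab), (1, 1, ba)]),
      ((1, ac), [(1, 1, ab), (1, 1, bc), (1, 1, ac)]), ((1, aba), [(1, 1, aba)]),
      ((1, abc), [(1, 1, abc)]), ((1, bac), [(1, 1, bac)]), ((1, abac), [(1, 1, abac)]),
      ((2, c), [(1, 2, c)]), ((2, ba), [(-1, 2, ab), (1, 2, ba)]),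
      ((2, ac), [(1, 2, ab), (1, 2, bc), (1, 2, ac)]), ((2, aba), [(1, 2, aba)]),
      ((2, abc), [(1, 2, abc)]), ((2, bac), [(1, 2, bac)]), ((2, abac), [(1, 2, abac)]),
      ((3, b), [(1, 3, a), (1, 3, b), (1, 3, c)]), ((3, ba), [(-1, 3, ab), (1, 3, ba)]),
      ((3, ac), [(1, 3, ab), (1, 3, bc), (1, 3, ac)]), ((3, aba), [(1, 3, aba)]),
      ((3, abc), [(1, 3, abc)]), ((3, bac), [(1, 3, bac)]), ((3, abac), [(1, 3, abac)]),
      ((4, bc), [(2, 4, ab), (1, 4, bc), (1, 4, ba), (-1, 4, ac)]),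
      ((4, abc), [(-1, 4, aba), (1, 4, abc)]), ((4, bac), [(1, 4, bac)]),
      ((4, abac), [(1, 4, abac)]), ((5, a), [(-1, 4, b), (1, 4, c), (1, 5, a), (-1, 5, c)]),
      ((5, b), [(1, 4, a), (-1, 4, b), (1, 5, b), (-1, 5, c)]),
      ((5, ab), [(-2, 4, ab), (-2, 4, ba), (1, 5, ab), (1, 5, ba)]),
      ((5, bc), [(1, 4, ab), (1, 5, bc)]), ((5, ac), [(-1, 4, ba), (1, 5, ba), (1, 5, ac)]),
      ((5, aba), [(1, 5, aba)]), ((5, abc), [(-1, 4, aba), (1, 5, abc)]),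
      ((5, bac), [(1, 4, aba), (1, 5, bac)]), ((5, abac), [(1, 5, abac)])]
  inverse
    | (0, a) => [(3, 0, 1)]
    | (0, ba) => [(6, 0, b)]
    | (0, ac) => [(6, 0, c)]
    | (0, aba) => [(6, 0, ab)]
    | (0, abc) => [(6, 0, ab), (6, 0, bc)]
    | (1, b) => [(3, 1, 1)]
    | (1, ab) => [(6, 1, a)]
    | (1, bc) => [(6, 1, c)]
    | (1, aba) => [(6, 1, ab)]
    | (1, bac) => [(-6, 1, bc)]
    | (2, c) => [(3, 2, 1)]
    | (2, ab) => [(-6, 2, a)]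
    | (2, ba) => [(-6, 2, b)]
    | (2, abc) => [(6, 2, ab), (6, 2, bc)]
    | (2, bac) => [(-6, 2, bc)]
    | (3, a) => [(3, 3, 1)]
    | (3, bc) => [(-6, 3, a), (-6, 3, c)]
    | (3, ba) => [(-6, 3, c)]
    | (3, aba) => [(4, 3, ab), (2, 3, bc)]
    | (3, bac) => [(-2, 3, ab), (-4, 3, bc)]
    | (4, a) => [(-2, 4, 1), (-2, 5, 1)]
    | (4, b) => [(2, 4, 1), (-4, 5, 1)]
    | (4, bc) => [(-6, 4, a), (6, 5, c)]
    | (4, ba) => [(2, 4, a), (-4, 4, b), (2, 4, c), (-6, 5, c)]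
    | (4, ac) => [(-4, 4, a), (2, 4, b), (-4, 4, c), (6, 5, c)]
    | (4, aba) => [(-6, 4, ab)]
    | (4, abc) => [(6, 4, ab), (12, 4, ba), (-6, 4, ac), (-6, 5, ba)]
    | (4, abac) => [(-6, 4, aba)]
    | (5, ba) => [(6, 5, c)]
    | (5, aba) => [(6, 4, ba), (-6, 5, ba)]
    | (5, bac) => [(-6, 4, ab), (6, 4, ac)]
    | _ => []

/-- The cocycles in an even degree at least four. -/
def cocyclesEven : CocycleTable Word 6 6 41 where
  scalar := 6
  cocycle :=
    ![((0, 1), [(1, 0, 1)]), ((0, a), [(1, 0, a)]), ((0, ba), [(1, 0, ab), (1, 0, ba)]),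
      ((0, ac), [(-1, 0, ab), (-1, 0, bc), (1, 0, ac)]), ((0, aba), [(1, 0, aba)]),
      ((0, abc), [(1, 0, abc)]), ((0, abac), [(1, 0, abac)]), ((1, 1), [(1, 1, 1)]),
      ((1, b), [(1, 1, b)]), ((1, ba), [(1, 1, ab), (1, 1, ba)]),
      ((1, ac), [(-1, 1, ab), (-1, 1, bc), (1, 1, ac)]), ((1, aba), [(1, 1, aba)]),
      ((1, bac), [(1, 1, bac)]), ((1, abac), [(1, 1, abac)]), ((2, 1), [(1, 2, 1)]),
      ((2, c), [(1, 2, c)]), ((2, ba), [(1, 2, ab), (1, 2, ba)]),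
      ((2, ac), [(-1, 2, ab), (-1, 2, bc), (1, 2, ac)]), ((2, abc), [(1, 2, abc)]),
      ((2, bac), [(1, 2, bac)]), ((2, abac), [(1, 2, abac)]), ((3, 1), [(1, 3, 1)]),
      ((3, c), [(1, 3, a), (1, 3, b), (1, 3, c)]), ((3, ba), [(1, 3, ab), (1, 3, ba)]),
      ((3, ac), [(-1, 3, ab), (-1, 3, bc), (1, 3, ac)]), ((3, abc), [(1, 3, aba), (1, 3, abc)]),
      ((3, bac), [(1, 3, aba), (1, 3, bac)]), ((3, abac), [(1, 3, abac)]),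
      ((4, bc), [(1, 4, ab), (1, 4, bc), (-1, 5, ac)]),
      ((4, bac), [(-1, 4, aba), (1, 4, abc), (1, 4, bac)]), ((4, abac), [(1, 4, abac)]),
      ((5, 1), [(1, 4, 1), (1, 5, 1)]), ((5, b), [(-1, 4, a), (1, 4, b), (-1, 5, a), (1, 5, b)]),
      ((5, c), [(-1, 4, a), (1, 4, c), (-1, 5, a), (1, 5, c)]), ((5, ab), [(1, 4, ba), (1, 5, ab)]),
      ((5, bc), [(-1, 4, ba), (-1, 4, ac), (1, 5, bc)]), ((5, ba), [(1, 4, ab), (1, 5, ba)]),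
      ((5, aba), [(-1, 4, aba), (1, 5, aba)]), ((5, abc), [(-1, 4, abc), (1, 5, abc)]),
      ((5, bac), [(-1, 4, aba), (1, 4, abc), (1, 5, bac)]), ((5, abac), [(1, 5, abac)])]
  inverse
    | (0, ba) => [(-6, 0, b)]
    | (0, ac) => [(6, 0, c)]
    | (0, aba) => [(-6, 0, ab)]
    | (0, abc) => [(6, 0, ab), (6, 0, bc)]
    | (0, abac) => [(3, 0, bac)]
    | (1, ab) => [(-6, 1, a)]
    | (1, bc) => [(6, 1, c)]
    | (1, aba) => [(6, 1, ab)]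
    | (1, bac) => [(6, 1, bc)]
    | (1, abac) => [(3, 1, abc)]
    | (2, ab) => [(-6, 2, a)]
    | (2, ba) => [(-6, 2, b)]
    | (2, abc) => [(-6, 2, ab), (-6, 2, bc)]
    | (2, bac) => [(-6, 2, bc)]
    | (2, abac) => [(-3, 2, aba)]
    | (3, ab) => [(-4, 3, a), (-2, 3, b)]
    | (3, ba) => [(-2, 3, a), (-4, 3, b)]
    | (3, aba) => [(6, 3, bc)]
    | (3, bac) => [(6, 3, ab)]
    | (3, abac) => [(-3, 3, aba)]
    | (4, a) => [(-6, 4, 1)]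
    | (4, ab) => [(-2, 4, a), (-2, 4, b), (-2, 4, c)]
    | (4, bc) => [(2, 4, a), (2, 4, b), (2, 4, c), (6, 5, a)]
    | (4, aba) => [(-2, 4, ab), (-2, 4, ba), (2, 4, ac), (-2, 5, ac)]
    | (4, abac) => [(-6, 4, aba), (6, 4, abc)]
    | (5, ba) => [(-4, 4, a), (2, 4, b), (-4, 4, c), (-6, 5, a)]
    | (5, ac) => [(6, 4, c)]
    | (5, aba) => [(-6, 5, ac)]
    | (5, abc) => [(-6, 4, ab)]
    | (5, bac) => [(4, 4, ab), (-2, 4, ba), (-4, 4, ac), (-2, 5, ac)]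
    | (5, abac) => [(-6, 4, aba)]
    | _ => []

end Tables

section Koszul

/-- The ranks of the terms of the bimodule Koszul complex of `FK(3)`. -/
def koszulRank : ℕ → ℕ
  | 0 => 1
  | 1 => 3
  | 2 => 5
  | _ + 3 => 6

/-- The differentials of the bimodule Koszul complex. -/
def differential : (n : ℕ) → BimoduleTable Word (koszulRank (n + 1)) (koszulRank n)
  | 0 => d₀
  | 1 => d₁
  | 2 => d₂
  | 3 => dEven
  | 4 => dOdd
  | n + 5 => differential (n + 3)

/-- The maps along which the shifted copies of the Koszul complex are spliced. -/
def splicing : (n : ℕ) → BimoduleTable Word (koszulRank n) (koszulRank (n + 3))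
  | 0 => f₀
  | 1 => f₁
  | 2 => f₂
  | 3 => fOdd
  | 4 => fEven
  | n + 5 => splicing (n + 3)

lemma differential_comp_differential :
    ∀ n g, ((differential n).comp (differential (n + 1)) g).Equiv []
  | 0 => by decide +kernel
  | 1 => by decide +kernel
  | 2 => by decide +kernel
  | 3 => by decide +kernel
  | 4 => by decide +kernel
  | n + 5 => differential_comp_differential (n + 3)

lemma differential_comp_splicing_zero :
    ∀ g, ((differential 2).comp (splicing 0) g).Equiv [] := by
  decide +kernel

lemma differential_comp_splicing : ∀ n g, (((differential (n + 3)).comp (splicing (n + 1))).add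
    ((splicing n).comp (differential n)) g).Equiv []
  | 0 => by decide +kernel
  | 1 => by decide +kernel
  | 2 => by decide +kernel
  | 3 => by decide +kernel
  | 4 => by decide +kernel
  | n + 5 => differential_comp_splicing (n + 3)

lemma splicing_comp_splicing : ∀ n g, ((splicing (n + 3)).comp (splicing n) g).Equiv []
  | 0 => by decide +kernel
  | 1 => by decide +kernel
  | 2 => by decide +kernel
  | 3 => by decide +kernel
  | 4 => by decide +kernel
  | n + 5 => splicing_comp_splicing (n + 3)

lemma homotopy_augmentation :
    ∀ g u, ((d₀.toRight.comp s₀).add (.multiplication 18) g u).Equiv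
      (RightTable.scalar 1 18 g u) := by
  decide +kernel

lemma homotopy_zero :
    ∀ g u, ((d₁.toRight.comp s₁).add (s₀.comp d₀.toRight) g u).Equiv
      (RightTable.scalar 3 18 g u) := by
  decide +kernel

lemma homotopy_one :
    ∀ g u, ((d₂.toRight.comp s₂).add (s₁.comp d₁.toRight) g u).Equiv
      (RightTable.scalar 5 18 g u) := by
  decide +kernel

lemma homotopy_two : ∀ g u, ((dEven.toRight.comp s₃).add ((f₀.toRight.comp τ).add
    (s₂.comp d₂.toRight)) g u).Equiv (RightTable.scalar 6 18 g u) := by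
  decide +kernel

lemma homotopy_odd :
    ∀ g u, ((dOdd.toRight.comp sEven).add (sOdd.comp dEven.toRight) g u).Equiv
      (RightTable.scalar 6 1 g u) := by
  decide +kernel

lemma homotopy_even :
    ∀ g u, ((dEven.toRight.comp sOdd).add (sEven.comp dOdd.toRight) g u).Equiv
      (RightTable.scalar 6 1 g u) := by
  decide +kernel

lemma retraction_splicing :
    ∀ g u, ((d₀.toRight.comp s₀).add (τ.comp f₀.toRight) g u).Equiv
      (RightTable.scalar 1 18 g u) := by
  decide +kernel

lemma retraction_differential : ∀ g u, (τ.comp dEven.toRight g u).Equiv [] := by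
  decide +kernel

/-- The dimensions of the spaces of cocycles of the Koszul complex with coefficients in `FK(3)`. -/
def cocycleCount : ℕ → ℕ
  | 0 => 4
  | 1 => 15
  | 2 => 31
  | _ + 3 => 41

/-- The cocycles of the Koszul complex with coefficients in `FK(3)`. -/
def cocycles :
    (n : ℕ) → CocycleTable Word (koszulRank (n + 1)) (koszulRank n) (cocycleCount n)
  | 0 => cocycles₀
  | 1 => cocycles₁
  | 2 => cocycles₂
  | 3 => cocyclesOdd
  | 4 => cocyclesEven
  | n + 5 => cocycles (n + 3)

lemma scalar_cocycles_dvd : ∀ n, (cocycles n).scalar ∣ 18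
  | 0 => by decide
  | 1 => by decide
  | 2 => by decide
  | 3 => by decide
  | 4 => by decide
  | n + 5 => scalar_cocycles_dvd (n + 3)

lemma cocycles_certifies : ∀ n, (cocycles n).Certifies (differential n)
  | 0 => by decide +kernel
  | 1 => by decide +kernel
  | 2 => by decide +kernel
  | 3 => by decide +kernel
  | 4 => by decide +kernel
  | n + 5 => cocycles_certifies (n + 3)

lemma splicing_dual_cocycles :
    ∀ n i, (bind (splicing n).dual ((cocycles (n + 3)).cocycle i).2).Equiv []
  | 0 => by decide +kernel
  | 1 => by decide +kernel
  | 2 => by decide +kernel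
  | 3 => by decide +kernel
  | 4 => by decide +kernel
  | n + 5 => splicing_dual_cocycles (n + 3)

end Koszul

/-! ### Hochschild cohomology of `FK(3)` -/

lemma scalar_cocycles_ne_zero {k : Type*} [Field k] (h : ((18 : ℤ) : k) ≠ 0) (n : ℕ) :
    ((cocycles n).scalar : k) ≠ 0 :=
  ne_zero_of_dvd_ne_zero h (map_dvd (Int.castRingHom k) (scalar_cocycles_dvd n))

namespace EnvelopingBasis

section Homotopy

variable {k R A W : Type*} [Field k] [Ring R] [Algebra k R] [AddCommGroup A]
  [Module k A] [Module R A] [StructureConstants W]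
  (B : EnvelopingBasis k R A W) {r s t t' : ℕ} {c : ℤ}

lemma bimoduleMap_apply (F : BimoduleTable W r s) (x : Fin r → R) :
    B.bimoduleMap F x = B.rightMap F.toRight x :=
  LinearMap.congr_fun (B.bimoduleMap_restrictScalars F) x

lemma mem_of_rightMap_scalar_mem (hc : (c : k) ≠ 0) {p : Submodule R (Fin r → R)} {x : Fin r → R}
    (h : B.rightMap (.scalar r c) x ∈ p) : x ∈ p := by
  rw [rightMap_scalar, LinearMap.smul_apply, LinearMap.id_apply, ← Int.cast_smul_eq_zsmul k] at h
  exact ((p.restrictScalars k).smul_mem_iff hc).1 h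

variable [DecidableEq W]

lemma ker_bimoduleMap_le_range (hc : (c : k) ≠ 0) {F : BimoduleTable W s r}
    {F' : BimoduleTable W t s} {T : RightTable W s t} {T' : RightTable W r s}
    (h : ∀ g u, ((F'.toRight.comp T).add (T'.comp F.toRight) g u).Equiv
      (RightTable.scalar s c g u)) :
    LinearMap.ker (B.bimoduleMap F) ≤ LinearMap.range (B.bimoduleMap F') := fun x hx => by
  refine B.mem_of_rightMap_scalar_mem hc ⟨B.rightMap T x, ?_⟩
  rw [← B.rightMap_congr h, ← rightMap_add, ← rightMap_comp, ← rightMap_comp, LinearMap.add_apply,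
    LinearMap.comp_apply, LinearMap.comp_apply, ← bimoduleMap_apply, ← bimoduleMap_apply,
    LinearMap.mem_ker.1 hx, map_zero, add_zero]

lemma ker_bimoduleMap_le_range_sup (hc : (c : k) ≠ 0) {F : BimoduleTable W s r}
    {F' : BimoduleTable W t s} {G : BimoduleTable W t' s} {T : RightTable W s t}
    {T' : RightTable W r s} {S : RightTable W s t'}
    (h : ∀ g u, ((F'.toRight.comp T).add ((G.toRight.comp S).add (T'.comp F.toRight)) g u).Equiv
      (RightTable.scalar s c g u)) :
    LinearMap.ker (B.bimoduleMap F) ≤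
      LinearMap.range (B.bimoduleMap F') ⊔ LinearMap.range (B.bimoduleMap G) := fun x hx => by
  refine B.mem_of_rightMap_scalar_mem hc (Submodule.mem_sup.2
    ⟨_, ⟨B.rightMap T x, rfl⟩, _, ⟨B.rightMap S x, rfl⟩, ?_⟩)
  rw [← B.rightMap_congr h, ← rightMap_add, ← rightMap_add, ← rightMap_comp, ← rightMap_comp,
    ← rightMap_comp, LinearMap.add_apply, LinearMap.add_apply, LinearMap.comp_apply,
    LinearMap.comp_apply, LinearMap.comp_apply, ← bimoduleMap_apply, ← bimoduleMap_apply,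
    ← bimoduleMap_apply, LinearMap.mem_ker.1 hx, map_zero, add_zero]

lemma comap_bimoduleMap_range_le (hc : (c : k) ≠ 0) {F : BimoduleTable W t s}
    {F' : BimoduleTable W t' r} {G : BimoduleTable W r s} {T : RightTable W r t'}
    {S : RightTable W s r} (hS : ∀ g u, (S.comp F.toRight g u).Equiv [])
    (h : ∀ g u, ((F'.toRight.comp T).add (S.comp G.toRight) g u).Equiv
      (RightTable.scalar r c g u)) :
    (LinearMap.range (B.bimoduleMap F)).comap (B.bimoduleMap G) ≤
      LinearMap.range (B.bimoduleMap F') := by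
  rintro x ⟨y, hy⟩
  have hSy : B.rightMap S (B.bimoduleMap F y) = 0 := by
    rw [bimoduleMap_apply, ← LinearMap.comp_apply, rightMap_comp, B.rightMap_eq_zero hS,
      LinearMap.zero_apply]
  refine B.mem_of_rightMap_scalar_mem hc ⟨B.rightMap T x, ?_⟩
  rw [← B.rightMap_congr h, ← rightMap_add, ← rightMap_comp, ← rightMap_comp, LinearMap.add_apply,
    LinearMap.comp_apply, LinearMap.comp_apply, ← bimoduleMap_apply, ← bimoduleMap_apply, ← hy,
    hSy, add_zero]

variable [IsScalarTower k R A]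

/-- The multiplication map from the free bimodule of rank one to the algebra. -/
noncomputable def multiplication : (Fin 1 → R) →ₗ[R] A := B.homBasis 1 (0, 1)

omit [DecidableEq W] in
lemma multiplication_free (g : Fin 1) (u v : W) :
    B.multiplication (B.free 1 (g, u, v)) = eval B.word (StructureConstants.mul u v) := by
  rw [multiplication, Subsingleton.elim g 0, homBasis_single_self, pair_smul_word,
    StructureConstants.mul_one, eval_single]

omit [DecidableEq W] in
lemma multiplication_surjective : Function.Surjective B.multiplication := by
  suffices h : (LinearMap.range B.multiplication).restrictScalars k = ⊤ from
    LinearMap.range_eq_top.1 ((Submodule.restrictScalars_eq_top_iff k R A).1 h)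
  rw [eq_top_iff, ← B.word.span_eq, Submodule.span_le]
  rintro _ ⟨w, rfl⟩
  exact ⟨B.free 1 (0, w, 1), by rw [multiplication_free, StructureConstants.mul_one, eval_single]⟩

lemma multiplication_comp_bimoduleMap {F : BimoduleTable W r 1} (h : (F.dual (0, 1)).Equiv []) :
    B.multiplication ∘ₗ B.bimoduleMap F = 0 := by
  have hF := B.lcomp_bimoduleMap_homBasis F (0, 1)
  rwa [h.eval_eq, eval_nil] at hF

lemma ker_multiplication_le_range (hc : (c : k) ≠ 0) {F : BimoduleTable W r 1}
    {T : RightTable W 1 r}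
    (h : ∀ g u, ((F.toRight.comp T).add (.multiplication c) g u).Equiv
      (RightTable.scalar 1 c g u)) :
    LinearMap.ker B.multiplication ≤ LinearMap.range (B.bimoduleMap F) := fun x hx => by
  have hj : B.rightMap (.multiplication c) = (B.word.constr k fun w => c • B.free 1 (0, 1, w)) ∘ₗ
      B.multiplication.restrictScalars k := by
    refine (B.free 1).ext fun i => ?_
    rw [rightMap_free, RightTable.multiplication, eval_cons, eval_nil, add_zero, smul_comm,
      pair_smul_free, LinearMap.comp_apply, LinearMap.restrictScalars_apply, multiplication_free,
      map_eval]
    simp only [Module.Basis.constr_basis, StructureConstants.one_mul, eval_single]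
    exact map_eval (DistribSMul.toAddMonoidHom _ c) _ _
  refine B.mem_of_rightMap_scalar_mem hc ⟨B.rightMap T x, ?_⟩
  rw [← B.rightMap_congr h, ← rightMap_add, ← rightMap_comp, hj, LinearMap.add_apply,
    LinearMap.comp_apply, LinearMap.comp_apply, ← bimoduleMap_apply,
    LinearMap.restrictScalars_apply, LinearMap.mem_ker.1 hx, map_zero, add_zero]

end Homotopy

section Koszul

variable {k R A : Type u} [Field k] [Ring R] [Algebra k R] [AddCommGroup A] [Module k A]
  [Module R A] (B : EnvelopingBasis k R A Word)

/-- The term in degree `n` of the bimodule Koszul complex of `FK(3)`, over the enveloping algebra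
`R`. -/
abbrev KoszulTerm (R : Type u) (n : ℕ) : Type u := Fin (koszulRank n) → R

/-- The bimodule Koszul complex of `FK(3)`. -/
noncomputable def koszul : SplicingData R (KoszulTerm R) where
  d n := B.bimoduleMap (differential n)
  f n := B.bimoduleMap (splicing n)
  d_comp_d n := by
    rw [bimoduleMap_comp, B.bimoduleMap_eq_zero (differential_comp_differential n)]
  d_comp_f_zero := by
    rw [bimoduleMap_comp, B.bimoduleMap_eq_zero differential_comp_splicing_zero]
  d_comp_f_add n := by
    rw [bimoduleMap_comp, bimoduleMap_comp, bimoduleMap_add,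
      B.bimoduleMap_eq_zero (differential_comp_splicing n)]
  f_comp_f n := by
    rw [bimoduleMap_comp, B.bimoduleMap_eq_zero (splicing_comp_splicing n)]

lemma ker_koszul_d_le_range (h : ((18 : ℤ) : k) ≠ 0) : ∀ n, n ≠ 2 →
    LinearMap.ker (B.koszul.d n) ≤ LinearMap.range (B.koszul.d (n + 1))
  | 0, _ => B.ker_bimoduleMap_le_range h homotopy_zero
  | 1, _ => B.ker_bimoduleMap_le_range h homotopy_one
  | 2, hn => absurd rfl hn
  | 3, _ => B.ker_bimoduleMap_le_range (c := 1) (by simp) homotopy_odd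
  | 4, _ => B.ker_bimoduleMap_le_range (c := 1) (by simp) homotopy_even
  | n + 5, _ => ker_koszul_d_le_range h (n + 3) (by simp)

lemma koszul_isExact (h : ((18 : ℤ) : k) ≠ 0) : B.koszul.IsExact where
  ker_d_le := B.ker_koszul_d_le_range h
  ker_d_two_le := B.ker_bimoduleMap_le_range_sup h homotopy_two
  comap_f_le := B.comap_bimoduleMap_range_le h retraction_differential retraction_splicing

variable [IsScalarTower k R A]

/-- The resolution of the algebra spliced from shifted copies of the Koszul complex. -/
noncomputable def resolution (h : ((18 : ℤ) : k) ≠ 0) : ProjectiveResolution (ModuleCat.of R A) :=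
  (B.koszul_isExact h).resolution
    (B.multiplication_comp_bimoduleMap (F := d₀) (by decide +kernel))
    (B.ker_multiplication_le_range h homotopy_augmentation)
    B.multiplication_surjective

include B in
lemma finite_koszulTerm_hom (n : ℕ) : Module.Finite k (KoszulTerm R n →ₗ[R] A) :=
  Module.Finite.of_basis (B.homBasis (koszulRank n))

include B in
lemma finrank_koszulTerm_hom (n : ℕ) :
    Module.finrank k (KoszulTerm R n →ₗ[R] A) = 12 * koszulRank n := by
  rw [Module.finrank_eq_card_basis (B.homBasis (koszulRank n)), Fintype.card_prod,
    Fintype.card_fin, mul_comm]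
  rfl

end Koszul

section Dimension

/-- The space `Extⁿ_R(A, A)`. -/
noncomputable def extSelf (k R A : Type u) [Field k] [Ring R] [Algebra k R] [AddCommGroup A]
    [Module R A] (n : ℕ) : ModuleCat k :=
  ((Ext k (ModuleCat R) n).obj (Opposite.op (ModuleCat.of R A))).obj (ModuleCat.of R A)

open SplicingData

variable {k R A : Type u} [Field k] [Ring R] [Algebra k R] [AddCommGroup A] [Module k A]
  [Module R A] [IsScalarTower k R A] (B : EnvelopingBasis k R A Word) {i : ℕ}

include B in
lemma finrank_tail_hom (hi : i < 4) (q : ℕ) :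
    Module.finrank k (tail R (KoszulTerm R) (4 * q + i + 4) →ₗ[R] A) =
      72 * q + 12 * koszulRank i := by
  have := B.finite_koszulTerm_hom
  rw [finrank_tail_hom_add_four, B.finrank_koszulTerm_hom]
  induction q with
  | zero => rw [finrank_tail_hom_of_lt (by omega)]; simp
  | succ q ih =>
    rw [show 4 * (q + 1) + i = 4 * q + i + 4 by ring, finrank_tail_hom_add_four,
      B.finrank_koszulTerm_hom, ih, show koszulRank (4 * q + i + 4) = 6 from rfl]
    ring

lemma finrank_ker_lcomp_koszul_d (h : ((18 : ℤ) : k) ≠ 0) (n : ℕ) :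
    Module.finrank k (LinearMap.ker (LinearMap.lcomp k A (B.koszul.d n))) = cocycleCount n :=
  B.finrank_ker_lcomp_of_certifies (cocycles_certifies n) (scalar_cocycles_ne_zero h n)

lemma finrank_ker_lcomp_koszul_tailD (h : ((18 : ℤ) : k) ≠ 0) (hi : i < 4) (q : ℕ) :
    Module.finrank k (LinearMap.ker (LinearMap.lcomp k A (B.koszul.tailD (4 * q + i + 4)))) =
      41 * q + cocycleCount i := by
  have := B.finite_koszulTerm_hom
  have hf (n : ℕ) : LinearMap.ker (LinearMap.lcomp k A (B.koszul.d (n + 3))) ≤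
      LinearMap.ker (LinearMap.lcomp k A (B.koszul.f n)) :=
    B.ker_lcomp_le_of_certifies (cocycles_certifies (n + 3)) (scalar_cocycles_ne_zero h (n + 3))
      (splicing_dual_cocycles n)
  rw [finrank_ker_lcomp_tailD_add_four hf, finrank_ker_lcomp_koszul_d B h]
  induction q with
  | zero => rw [finrank_ker_lcomp_tailD_of_lt _ (by omega)]; simp
  | succ q ih =>
    rw [show 4 * (q + 1) + i = 4 * q + i + 4 by ring, finrank_ker_lcomp_tailD_add_four hf,
      finrank_ker_lcomp_koszul_d B h, ih, show cocycleCount (4 * q + i + 4) = 41 from rfl]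
    ring

include B in
lemma finrank_extSelf_zero (h : ((18 : ℤ) : k) ≠ 0) : Module.finrank k (extSelf k R A 0) = 4 := by
  have := B.finite_koszulTerm_hom
  have (n : ℕ) : Module.Finite k (B.koszul.chain.X n →ₗ[R] A) := finite_tail_hom (n + 4)
  rw [extSelf, ((B.resolution h).isoExt 0 (ModuleCat.of R A)).toLinearEquiv.finrank_eq]
  refine (finrank_linearYonedaObj_homology_zero B.koszul.chain).trans ?_
  rw [hom_chain_d]
  exact B.finrank_ker_lcomp_koszul_tailD h (i := 0) (by simp) 0

lemma finrank_extSelf_succ (h : ((18 : ℤ) : k) ≠ 0) (n : ℕ) :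
    Module.finrank k (extSelf k R A (n + 1)) +
        Module.finrank k (tail R (KoszulTerm R) (n + 4) →ₗ[R] A) =
      Module.finrank k (LinearMap.ker (LinearMap.lcomp k A (B.koszul.tailD (n + 5)))) +
        Module.finrank k (LinearMap.ker (LinearMap.lcomp k A (B.koszul.tailD (n + 4)))) := by
  have := B.finite_koszulTerm_hom
  have (n : ℕ) : Module.Finite k (B.koszul.chain.X n →ₗ[R] A) := finite_tail_hom (n + 4)
  rw [extSelf, ((B.resolution h).isoExt (n + 1) (ModuleCat.of R A)).toLinearEquiv.finrank_eq]
  refine (finrank_linearYonedaObj_homology_succ B.koszul.chain n).trans ?_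
  rw [hom_chain_d, hom_chain_d]
  rfl

include B in
lemma finrank_extSelf_four_mul_add (h : ((18 : ℤ) : k) ≠ 0) (hi : i < 3) (q : ℕ) :
    Module.finrank k (extSelf k R A (4 * q + i + 1)) + 12 * koszulRank i =
      10 * q + cocycleCount (i + 1) + cocycleCount i := by
  have key := B.finrank_extSelf_succ h (4 * q + i)
  rw [B.finrank_tail_hom (by omega), B.finrank_ker_lcomp_koszul_tailD h (i := i) (by omega),
    show 4 * q + i + 5 = 4 * q + (i + 1) + 4 by ring,
    B.finrank_ker_lcomp_koszul_tailD h (by omega)] at key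
  omega

include B in
lemma finrank_extSelf_four_mul (h : ((18 : ℤ) : k) ≠ 0) :
    ∀ q, Module.finrank k (extSelf k R A (4 * q)) = 10 * q + 4
  | 0 => B.finrank_extSelf_zero h
  | q + 1 => by
    have key := B.finrank_extSelf_succ h (4 * q + 3)
    rw [B.finrank_tail_hom (by omega), B.finrank_ker_lcomp_koszul_tailD h (i := 3) (by omega),
      show 4 * q + 3 + 5 = 4 * (q + 1) + 0 + 4 by ring,
      B.finrank_ker_lcomp_koszul_tailD h (i := 0) (by omega)] at key
    simp only [koszulRank, cocycleCount] at key
    rw [show 4 * (q + 1) = 4 * q + 3 + 1 by ring]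
    omega

end Dimension

end EnvelopingBasis

lemma finrank_HHcohomology {k : Type} [Field k] (h : ((18 : ℤ) : k) ≠ 0) (q : ℕ) :
    Module.finrank k (HHcohomology k (4 * q)) = 10 * q + 4 ∧
    Module.finrank k (HHcohomology k (4 * q + 1)) = 10 * q + 7 ∧
    Module.finrank k (HHcohomology k (4 * q + 2)) = 10 * q + 10 ∧
    Module.finrank k (HHcohomology k (4 * q + 3)) = 10 * q + 12 := by
  let B := envelopingBasis k
  have h₁ : Module.finrank k (HHcohomology k (4 * q + 1)) + 12 * 1 = 10 * q + 15 + 4 :=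
    B.finrank_extSelf_four_mul_add h (i := 0) (by simp) q
  have h₂ : Module.finrank k (HHcohomology k (4 * q + 2)) + 12 * 3 = 10 * q + 31 + 15 :=
    B.finrank_extSelf_four_mul_add h (i := 1) (by simp) q
  have h₃ : Module.finrank k (HHcohomology k (4 * q + 3)) + 12 * 5 = 10 * q + 41 + 31 :=
    B.finrank_extSelf_four_mul_add h (i := 2) (by simp) q
  exact ⟨B.finrank_extSelf_four_mul h q, by omega, by omega, by omega⟩

lemma eighteen_ne_zero {k : Type*} [Field k] (h2 : ringChar k ≠ 2) (h3 : ringChar k ≠ 3) :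
    ((18 : ℤ) : k) ≠ 0 := fun h => by
  have hdvd : ringChar k ∣ 2 * 3 ^ 2 := ringChar.dvd (by exact_mod_cast h)
  rcases CharP.char_is_prime_or_zero k (ringChar k) with hp | h0
  · rcases hp.dvd_mul.1 hdvd with hd | hd
    · exact h2 ((Nat.prime_dvd_prime_iff_eq hp Nat.prime_two).1 hd)
    · exact h3 ((Nat.prime_dvd_prime_iff_eq hp Nat.prime_three).1 (hp.dvd_of_dvd_pow hd))
  · rw [h0] at hdvd
    norm_num at hdvd

end FKThree

/-- The dimensions of the Hochschild cohomology of `FK(3)`: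
`dim HHⁿ = (5/2)n + 4` if `n ≡ 0 (mod 4)`; `(5/2)n + 5` if `n ≡ 2 (mod 4)`;
`(5n+9)/2` if `n` is odd. -/
theorem FK3_hochschildCohomology_dim (h2 : ringChar k ≠ 2) (h3 : ringChar k ≠ 3) :
    (∀ n : ℕ, n % 4 = 0 → (Module.finrank k (HHcohomology k n) : ℚ) = 5 / 2 * n + 4) ∧
    (∀ n : ℕ, n % 4 = 2 → (Module.finrank k (HHcohomology k n) : ℚ) = 5 / 2 * n + 5) ∧
    (∀ n : ℕ, Odd n → (Module.finrank k (HHcohomology k n) : ℚ) = (5 * n + 9) / 2) := by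
  have h := FKThree.finrank_HHcohomology (FKThree.eighteen_ne_zero h2 h3)
  refine ⟨fun n hn => ?_, fun n hn => ?_, fun n hn => ?_⟩
  · obtain ⟨q, rfl⟩ : ∃ q, n = 4 * q := ⟨n / 4, by omega⟩
    rw [(h q).1]
    push_cast
    ring
  · obtain ⟨q, rfl⟩ : ∃ q, n = 4 * q + 2 := ⟨n / 4, by omega⟩
    rw [(h q).2.2.1]
    push_cast
    ring
  · rw [Nat.odd_iff] at hn
    obtain ⟨q, rfl | rfl⟩ : ∃ q, n = 4 * q + 1 ∨ n = 4 * q + 3 := ⟨n / 4, by omega⟩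
    · rw [(h q).2.1]
      push_cast
      ring
    · rw [(h q).2.2.2]
      push_cast
      ring
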